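/- arXiv:1905.04653 — 2 statements merged into one kernel-verified Lean document; each statement's English description precedes it below -/
import Mathlib

section
/- In every 3-coloring of the edges of the complete graph K_{4n-2} (n ≥ 1), there is a monochromatic connected matching with at least n edges. -/
open SimpleGraph

variable {V : Type*}

/-- `M` is a matching: a finite set of ordered pairs of adjacent vertices
with pairwise disjoint endpoints. -/
def IsMatchingSet (G : SimpleGraph V) (M : Finset (V × V)) : Prop :=
  (∀ e ∈ M, G.Adj e.1 e.2) ∧
  ∀ e ∈ M, ∀ f ∈ M, e ≠ f →
    e.1 ≠ f.1 ∧ e.1 ≠ f.2 ∧ e.2 ≠ f.1 ∧ e.2 ≠ f.2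

/-- `M` is a connected matching in `G`: a matching all of whose edges lie in
one connected component of `G`. -/
def ConnMatching (G : SimpleGraph V) (M : Finset (V × V)) : Prop :=
  IsMatchingSet G M ∧ ∀ e ∈ M, ∀ f ∈ M, G.Reachable e.1 f.1

/-- Vertex `v` is covered by the matching `M`. -/
def Covers (M : Finset (V × V)) (v : V) : Prop :=
  ∃ e ∈ M, v = e.1 ∨ v = e.2

/-- The color-`i` subgraph of `G` under the edge-coloring `c`. -/
def colorSub (G : SimpleGraph V) {k : ℕ} (c : Sym2 V → Fin k) (i : Fin k) :
    SimpleGraph V :=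
  SimpleGraph.fromRel (fun u v => G.Adj u v ∧ c s(u, v) = i)

/-!
Suppose that no colour has a connected matching of size `n`. By the Tutte–Berge formula, deleting a
small set of vertices from a connected piece of a colour leaves many components, so labelling each
remaining vertex by its component gives small label classes. If three such labellings are defined on
a common set and any two of its vertices share a label in one of them, counting the classes bounds
the number of all vertices by less than `4 * n - 2`.

Each colour either has a component missing fewer than `n` vertices or splits along a cut with at
least `n` vertices on both sides, and two of the three colours agree in this. If two colours have an
almost spanning component, the counting applies, since the third colour is connected off the two
deleted sets. If two colours have such cuts, the cuts divide the vertices into four cells, and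
diagonally opposite cells are completely joined in the third colour. When a cell has at least `n`
vertices, the third colour cannot join the two diagonals, so that cell is completely joined to each
of the other three in a different colour. Its bicliques are the connected pieces for the counting.
-/

open Finset

section Labellings

variable {α β : Type*}

theorem card_filter_mem_add_card_le {ι : Type*} [DecidableEq ι] {f : V → ι} {A : Finset V}
    {B : Finset ι} (hB : B ⊆ A.image f) (T : Finset ι) :
    #{v ∈ A | f v ∈ T} + #B ≤ #A + #T := by
  have hBT : B \ T ⊆ {v ∈ A | f v ∉ T}.image f := by grind
  have hcard : #(B \ T) ≤ #{v ∈ A | f v ∉ T} := (card_le_card hBT).trans card_image_le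
  have hsplit := card_filter_add_card_filter_not (s := A) (fun v => f v ∈ T)
  have := le_card_sdiff T B
  omega

theorem exists_center_or_two_labels {f : V → α} {g : V → β} {X Y W : Finset V}
    (hW : ∀ w, w ∈ W ↔ w ∈ X ∨ w ∈ Y) (hX : X.Nonempty) (hY : Y.Nonempty)
    (hfg : ∀ x ∈ X, ∀ y ∈ Y, f x = f y ∨ g x = g y) :
    (∃ w ∈ W, ∀ v ∈ W, f v = f w ∨ g v = g w) ∨
      ∃ x x', ∀ w ∈ W, (f w = f x ∨ f w = f x') ∧ (g w = g x ∨ g w = g x') := by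
  by_cases! h : ∃ w ∈ W, ∀ v ∈ W, f v = f w ∨ g v = g w
  · exact Or.inl h
  obtain ⟨x, hx⟩ := hX
  obtain ⟨y, hy⟩ := hY
  obtain ⟨x', hx'W, hxx'⟩ := h x (by grind)
  obtain ⟨y', hy'W, hyy'⟩ := h y (by grind)
  have hx' : x' ∈ X := by grind
  have hy' : y' ∈ Y := by grind
  refine Or.inr ⟨x, x', fun w hw => ?_⟩
  rcases (hW w).1 hw with hwX | hwY
  · have := hfg w hwX y hy
    have := hfg w hwX y' hy'
    grind
  · have := hfg x hx w hwY
    have := hfg x' hx' w hwY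
    grind

theorem label_eq_of_center {γ : Type*} {f : V → α} {g : V → β} {h : V → γ} {W : Finset V}
    (hfgh : ∀ x ∈ W, ∀ y ∈ W, x ≠ y → f x = f y ∨ g x = g y ∨ h x = h y) {w p q : V}
    (hw : ∀ v ∈ W, f v = f w ∨ g v = g w) (hp : p ∈ W) (hpw : f p ≠ f w) (hq : q ∈ W)
    (hqw : g q ≠ g w) : ∀ v ∈ W, ¬ (f v = f w ∧ g v = g w) → h v = h p := by
  have hqp : h q = h p := by grind
  intro v hv hvw
  by_cases hfv : f v = f w
  · have : h v = h p := by grind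
    exact this
  · have : h v = h q := by grind
    exact this.trans hqp

variable [DecidableEq α] [DecidableEq β]

/-- The labelling `f` has small fibers on `W`, as happens when `f` labels the pieces into which a
graph without connected matching of size `n` falls after deleting `s` vertices outside `W`. -/
structure SmallFibers (n s : ℕ) (f : V → α) (W : Finset V) : Prop where
  lt : s < n
  card_fiber : ∀ i, #{v ∈ W | f v = i} + s < 2 * n
  card_two_fibers : ∀ i j, #{v ∈ W | f v = i ∨ f v = j} + 2 * s + 2 ≤ 3 * n

variable {n s t r : ℕ} {f : V → α} {g : V → β} {W : Finset V}

theorem SmallFibers.mono {W' : Finset V} (hf : SmallFibers n s f W) (hW : W' ⊆ W) :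
    SmallFibers n s f W' where
  lt := hf.lt
  card_fiber i := by
    have := card_le_card (filter_subset_filter (f · = i) hW)
    have := hf.card_fiber i
    omega
  card_two_fibers i j := by
    have := card_le_card (filter_subset_filter (fun v => f v = i ∨ f v = j) hW)
    have := hf.card_two_fibers i j
    omega

theorem SmallFibers.card_le_of_two_labels (hf : SmallFibers n s f W) {i j : α}
    (hij : ∀ w ∈ W, f w = i ∨ f w = j) : #W + 2 * s + 2 ≤ 3 * n := by
  simpa only [filter_true_of_mem hij] using hf.card_two_fibers i j

theorem SmallFibers.card_add_card_inter_le (hf : SmallFibers n s f W)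
    (hg : SmallFibers n t g W) {w : V} (hw : ∀ v ∈ W, f v = f w ∨ g v = g w) :
    #W + #{v ∈ W | f v = f w ∧ g v = g w} + s + t + 2 ≤ 4 * n := by
  classical
  have hunion := card_union_add_card_inter {v ∈ W | f v = f w} {v ∈ W | g v = g w}
  rw [← filter_or, ← filter_and, filter_true_of_mem hw] at hunion
  have := hf.card_fiber (f w)
  have := hg.card_fiber (g w)
  omega

theorem SmallFibers.card_union_add_lt [DecidableEq V] {X Y : Finset V}
    (hf : SmallFibers n s f (X ∪ Y)) (hg : SmallFibers n t g (X ∪ Y)) (hX : X.Nonempty)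
    (hY : Y.Nonempty) (hfg : ∀ x ∈ X, ∀ y ∈ Y, f x = f y ∨ g x = g y) :
    #(X ∪ Y) + s + t + 2 < 4 * n := by
  rcases exists_center_or_two_labels (fun _ => mem_union) hX hY hfg with ⟨w, hw, hfgw⟩ | ⟨x, x', h⟩
  · have := hf.card_add_card_inter_le hg hfgw
    have : 0 < #{v ∈ X ∪ Y | f v = f w ∧ g v = g w} := card_pos.2 ⟨w, by simp [hw]⟩
    omega
  · have := hf.card_le_of_two_labels fun w hw => (h w hw).1
    have := hg.card_le_of_two_labels fun w hw => (h w hw).2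
    have := hf.lt
    omega

variable {γ : Type*} [DecidableEq γ] {h : V → γ}

theorem SmallFibers.card_add_lt_of_center (hf : SmallFibers n s f W) (hg : SmallFibers n t g W)
    (hr : r < n) (hh : ∀ i, #{v ∈ W | h v = i} + 2 * r < 2 * n)
    (hfgh : ∀ x ∈ W, ∀ y ∈ W, x ≠ y → f x = f y ∨ g x = g y ∨ h x = h y) {w : V}
    (hw : ∀ v ∈ W, f v = f w ∨ g v = g w) : #W + s + t + r + 2 < 4 * n := by
  have hs := hf.lt
  have ht := hg.lt
  by_cases! hfw : ∀ v ∈ W, f v = f w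
  · have := hf.card_fiber (f w)
    rw [filter_true_of_mem hfw] at this
    omega
  by_cases! hgw : ∀ v ∈ W, g v = g w
  · have := hg.card_fiber (g w)
    rw [filter_true_of_mem hgw] at this
    omega
  obtain ⟨p, hp, hpw⟩ := hfw
  obtain ⟨q, hq, hqw⟩ := hgw
  have hrest : #{v ∈ W | ¬ (f v = f w ∧ g v = g w)} ≤ #{v ∈ W | h v = h p} :=
    card_le_card fun v hv => by
      rw [mem_filter] at hv ⊢
      exact ⟨hv.1, label_eq_of_center hfgh hw hp hpw hq hqw v hv.1 hv.2⟩
  have := hf.card_add_card_inter_le hg hw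
  have := card_filter_add_card_filter_not (s := W) (fun v => f v = f w ∧ g v = g w)
  have := hh (h p)
  omega

theorem SmallFibers.card_add_lt_of_three_labellings (hf : SmallFibers n s f W)
    (hg : SmallFibers n t g W) (hr : r < n) (hh : ∀ i, #{v ∈ W | h v = i} + 2 * r < 2 * n)
    (hfgh : ∀ x ∈ W, ∀ y ∈ W, x ≠ y → f x = f y ∨ g x = g y ∨ h x = h y) :
    #W + s + t + r + 2 < 4 * n := by
  have hs := hf.lt
  have ht := hg.lt
  rcases W.eq_empty_or_nonempty with rfl | ⟨a, ha⟩
  · rw [card_empty]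
    omega
  by_cases! hconst : ∀ v ∈ W, h v = h a
  · have := hh (h a)
    rw [filter_true_of_mem hconst] at this
    omega
  obtain ⟨b, hb, hba⟩ := hconst
  rcases exists_center_or_two_labels (f := f) (g := g) (X := {v ∈ W | h v = h a})
    (Y := {v ∈ W | h v ≠ h a}) (W := W) (by grind) ⟨a, by grind⟩ ⟨b, by grind⟩ (by grind) with
    ⟨w, -, hw⟩ | ⟨x, x', hxx'⟩
  · exact hf.card_add_lt_of_center hg hr hh hfgh hw
  · have := hf.card_le_of_two_labels fun v hv => (hxx' v hv).1
    have := hg.card_le_of_two_labels fun v hv => (hxx' v hv).2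
    omega

end Labellings

section TutteBerge

theorem exists_isMatchingSet_of_involutive [Fintype V] {G : SimpleGraph V} {q : V → V}
    [DecidableEq V] (hq : Function.Involutive q) (hadj : ∀ v, q v ≠ v → G.Adj v (q v)) :
    ∃ M, IsMatchingSet G M ∧ Fintype.card V ≤ 2 * #M + #{v | q v = v} := by
  let _ : LinearOrder V := LinearOrder.lift' (Fintype.equivFin V) (Equiv.injective _)
  let A : Finset V := {v | v < q v}
  have hA : ∀ v, v ∈ A ↔ v < q v := by simp [A]
  refine ⟨A.map ⟨fun v => (v, q v), fun u v h => congrArg Prod.fst h⟩, ⟨?_, ?_⟩, ?_⟩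
  · simp only [mem_map]
    rintro _ ⟨v, hv, rfl⟩
    exact hadj v ((hA v).1 hv).ne'
  · simp only [mem_map]
    rintro _ ⟨u, hu, rfl⟩ _ ⟨v, hv, rfl⟩ huv
    have hlt : u < q u := (hA u).1 hu
    have hlt' : v < q v := (hA v).1 hv
    have huv' : u ≠ v := fun h => huv (by rw [h])
    have huqv : u ≠ q v := by
      rintro rfl
      exact (hq v ▸ hlt).asymm hlt'
    have hquv : q u ≠ v := by
      rintro rfl
      exact (hq u ▸ hlt').asymm hlt
    exact ⟨huv', huqv, hquv, hq.injective.ne huv'⟩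
  · have hcover : univ ⊆ A ∪ A.image q ∪ ({v | q v = v} : Finset V) := by
      intro v _
      simp only [mem_union, mem_image, hA, mem_filter_univ]
      rcases lt_trichotomy v (q v) with h | h | h
      · exact Or.inl (Or.inl h)
      · exact Or.inr h.symm
      · exact Or.inl (Or.inr ⟨q v, (hq v).symm ▸ h, hq v⟩)
    have hcard := card_le_card hcover
    have := card_union_le (A ∪ A.image q) ({v | q v = v} : Finset V)
    have := card_union_le A (A.image q)
    have := card_image_le (s := A) (f := q)
    rw [card_univ] at hcard
    rw [card_map]
    omega

/-- The join of `G` with the complete graph on `d` new vertices, used to reduce matchings missing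
at most `d` vertices to perfect matchings. -/
def joinComplete (G : SimpleGraph V) (d : ℕ) : SimpleGraph (V ⊕ Fin d) :=
  (G ⊕g ⊤) ⊔ completeBipartiteGraph V (Fin d)

variable {G : SimpleGraph V} {d : ℕ}

theorem joinComplete_adj_inl {u v : V} :
    (joinComplete G d).Adj (Sum.inl u) (Sum.inl v) ↔ G.Adj u v := by
  simp [joinComplete]

theorem joinComplete_adj_inr {x : V ⊕ Fin d} {j : Fin d} (hx : x ≠ Sum.inr j) :
    (joinComplete G d).Adj x (Sum.inr j) := by
  rcases x with v | i
  · simp [joinComplete]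
  · simpa [joinComplete] using hx

theorem exists_isMatchingSet_of_joinComplete [Fintype V] {P : (joinComplete G d).Subgraph}
    (hP : P.IsPerfectMatching) :
    ∃ M, IsMatchingSet G M ∧ Fintype.card V ≤ 2 * #M + d := by
  classical
  choose p hadj huniq using Subgraph.isPerfectMatching_iff.1 hP
  have hp : Function.Involutive p := fun x => (huniq _ _ (hadj x).symm).symm
  let q : V → V := fun v => Sum.elim id (fun _ => v) (p (Sum.inl v))
  have hq_inl : ∀ {v w}, p (Sum.inl v) = Sum.inl w → q v = w := by grind
  have hq_inr : ∀ {v j}, p (Sum.inl v) = Sum.inr j → q v = v := by grind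
  have hq : Function.Involutive q := by
    intro v
    rcases h : p (Sum.inl v) with w | j
    · rw [hq_inl h, hq_inl (hp.eq_iff.1 h).symm]
    · rw [hq_inr h, hq_inr h]
  have hq_adj : ∀ v, q v ≠ v → G.Adj v (q v) := by
    intro v hv
    rcases h : p (Sum.inl v) with w | j
    · rw [hq_inl h, ← joinComplete_adj_inl (d := d), ← h]
      exact (hadj _).adj_sub
    · exact absurd (hq_inr h) hv
  have hfixed : ∀ v ∈ ({v | q v = v} : Finset V), p (Sum.inl v) ∈ univ.map .inr := by
    intro v hv
    rcases h : p (Sum.inl v) with w | j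
    · have hvw : v = w := (mem_filter.1 hv).2.symm.trans (hq_inl h)
      exact absurd (hvw ▸ h).symm (hadj _).adj_sub.ne
    · simp
  have hcard : #{v | q v = v} ≤ d := by
    simpa using card_le_card_of_injOn _ hfixed (hp.injective.comp Sum.inl_injective).injOn
  obtain ⟨M, hM, hMcard⟩ := exists_isMatchingSet_of_involutive hq hq_adj
  exact ⟨M, hM, by omega⟩

theorem ncard_add_two_le_of_isTutteViolator [Finite V] (hV : Even (Nat.card V)) {U : Set V}
    (hU : G.IsTutteViolator U) :
    U.ncard + 2 ≤ Nat.card ((⊤ : G.Subgraph).deleteVerts U).coe.ConnectedComponent := by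
  set K := ((⊤ : G.Subgraph).deleteVerts U).coe
  have hlt : U.ncard < K.oddComponents.ncard := hU
  have hle : K.oddComponents.ncard ≤ Nat.card K.ConnectedComponent := Set.ncard_le_card _
  have hodd := K.odd_ncard_oddComponents
  have hcard : U.ncard + Nat.card ((⊤ : G.Subgraph).deleteVerts U).verts = Nat.card V := by
    rw [Subgraph.deleteVerts_verts, Subgraph.verts_top, ← Set.compl_eq_univ_sdiff,
      Nat.card_coe_set_eq, Set.ncard_add_ncard_compl]
  grind

theorem inr_mem_of_isTutteViolator_joinComplete {U : Set (V ⊕ Fin d)}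
    (hU : 1 < Nat.card ((⊤ : (joinComplete G d).Subgraph).deleteVerts U).coe.ConnectedComponent)
    (j : Fin d) : Sum.inr j ∈ U := by
  by_contra hj
  have hverts : Sum.inr j ∈ ((⊤ : (joinComplete G d).Subgraph).deleteVerts U).verts := by simpa
  have hpre : ((⊤ : (joinComplete G d).Subgraph).deleteVerts U).coe.Preconnected := by
    have hreach : ∀ x, ((⊤ : (joinComplete G d).Subgraph).deleteVerts U).coe.Reachable x
        ⟨Sum.inr j, hverts⟩ := by
      rintro ⟨x, hx⟩
      by_cases hxj : x = Sum.inr j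
      · subst hxj; rfl
      · refine Adj.reachable ?_
        simpa [hj, joinComplete_adj_inr hxj] using hx
    exact fun x y => (hreach x).trans (hreach y).symm
  have := hpre.subsingleton_connectedComponent
  have hcard := Finite.card_le_one_iff_subsingleton.2 this
  omega

/-- The hard direction of the Tutte–Berge formula. -/
theorem exists_card_add_two_le_card_connectedComponent [Fintype V] {n : ℕ}
    (hV : 2 * n ≤ Fintype.card V) (hG : ∀ M, IsMatchingSet G M → #M < n) :
    ∃ S : Finset V, Fintype.card V + #S + 2 ≤
      Nat.card (G.induce (S : Set V)ᶜ).ConnectedComponent + 2 * n := by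
  classical
  set d := Fintype.card V - 2 * n
  obtain ⟨U, hU⟩ : ∃ U, (joinComplete G d).IsTutteViolator U := by
    by_contra! hno
    obtain ⟨P, hP⟩ := tutte.2 hno
    obtain ⟨M, hM, hcard⟩ := exists_isMatchingSet_of_joinComplete hP
    have := hG M hM
    omega
  have heven : Even (Nat.card (V ⊕ Fin d)) := by
    rw [Nat.card_eq_fintype_card, Fintype.card_sum, Fintype.card_fin]
    exact ⟨Fintype.card V - n, by omega⟩
  have hUcard := ncard_add_two_le_of_isTutteViolator heven hU
  have hinr := inr_mem_of_isTutteViolator_joinComplete (U := U) (by omega)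
  let S : Finset V := {v | Sum.inl v ∈ U}
  have hScard : U.ncard = #S + d := by
    have hUS : U = (S.disjSum (univ : Finset (Fin d)) : Finset (V ⊕ Fin d)) := by
      ext (v | j)
      · simp [S]
      · simp [hinr j]
    rw [hUS, Set.ncard_coe_finset, card_disjSum, card_univ, Fintype.card_fin]
  let φ : G.induce (S : Set V)ᶜ →g ((⊤ : (joinComplete G d).Subgraph).deleteVerts U).coe :=
    { toFun := fun v => ⟨Sum.inl v, by simpa [S] using v.2⟩
      map_rel' := by
        rintro ⟨u, hu⟩ ⟨v, hv⟩ huv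
        have hu' : Sum.inl u ∉ U := by simpa [S] using hu
        have hv' : Sum.inl v ∉ U := by simpa [S] using hv
        have huv' : G.Adj u v := huv
        simpa [hu', hv', joinComplete_adj_inl] using huv' }
  have hφ : Function.Surjective φ := by
    rintro ⟨v | j, hx⟩
    · exact ⟨⟨v, by simpa [S] using hx⟩, rfl⟩
    · simp [hinr j] at hx
  have hsurj : Function.Surjective (ConnectedComponent.map φ) := by
    refine ConnectedComponent.ind fun x => ?_
    obtain ⟨v, rfl⟩ := hφ x
    exact ⟨(G.induce _).connectedComponentMk v, rfl⟩
  have := Nat.card_le_card_of_surjective _ hsurj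
  exact ⟨S, by omega⟩

end TutteBerge

section Barriers

/-- Every connected matching of `G` has fewer than `n` edges (compare `SimpleGraph.CliqueFree`). -/
def ConnMatchingFree (G : SimpleGraph V) (n : ℕ) : Prop :=
  ∀ M, ConnMatching G M → #M < n

/-- A deleted set `S` inside a connected piece `D` of `G`, as provided by the Tutte–Berge formula
when `G` has no connected matching of size `n`: the label `f` records the component of
`G.induce (D \ S)` containing a vertex, and the bounds express that there are many components. -/
structure IsBarrier [DecidableEq V] (n : ℕ) (G : SimpleGraph V) (D S : Finset V) (f : V → ℕ) :
    Prop where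
  eq_of_adj : ∀ u ∈ D \ S, ∀ v ∈ D \ S, G.Adj u v → f u = f v
  card_fiber : ∀ i, #{v ∈ D \ S | f v = i} + 2 * #S < 2 * n
  card_two_fibers : ∀ i j, #{v ∈ D \ S | f v = i ∨ f v = j} + 2 * #S ≤ 2 * n

variable {n : ℕ} {G : SimpleGraph V}

theorem ConnMatchingFree.pos (hG : ConnMatchingFree G n) : 0 < n :=
  hG ∅ ⟨⟨by simp, by simp⟩, by simp⟩

theorem ConnMatchingFree.two_le_of_adj (hG : ConnMatchingFree G n) {u v : V} (huv : G.Adj u v) :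
    2 ≤ n :=
  hG {(u, v)} ⟨⟨by simpa, by simp⟩, by simp⟩

theorem exists_label_of_connectedComponent_induce_compl [Fintype V] [DecidableEq V]
    (G : SimpleGraph V) (S : Finset V) :
    ∃ f : V → ℕ, (∀ u ∉ S, ∀ v ∉ S, G.Adj u v → f u = f v) ∧
      range (Nat.card (G.induce (S : Set V)ᶜ).ConnectedComponent) ⊆ Sᶜ.image f := by
  let e := Finite.equivFin (G.induce (S : Set V)ᶜ).ConnectedComponent
  let f : V → ℕ := fun v =>
    if hv : v ∉ S then e ((G.induce _).connectedComponentMk ⟨v, by simpa⟩) else 0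
  have hf : ∀ {v} (hv : v ∉ S),
      f v = e ((G.induce _).connectedComponentMk ⟨v, by simpa⟩) := fun hv => dif_pos hv
  refine ⟨f, fun u hu v hv huv => ?_, fun i hi => ?_⟩
  · have hadj : (G.induce (S : Set V)ᶜ).Adj ⟨u, by simpa⟩ ⟨v, by simpa⟩ := huv
    rw [hf hu, hf hv, ConnectedComponent.eq.2 hadj.reachable]
  · obtain ⟨C, hC⟩ := e.surjective ⟨i, mem_range.1 hi⟩
    obtain ⟨⟨v, hv⟩, rfl⟩ := C.exists_rep
    have hv' : v ∉ S := by simpa using hv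
    exact mem_image.2 ⟨v, mem_compl.2 hv', (hf hv').trans (congrArg Fin.val hC)⟩

theorem ConnMatchingFree.exists_isBarrier [Fintype V] [DecidableEq V] {D : Finset V}
    (hG : ConnMatchingFree G n) (hV : 2 * n ≤ Fintype.card V)
    (hD : ∀ u ∈ D, ∀ v ∈ D, G.Reachable u v) : ∃ S f, IsBarrier n G D S f := by
  let H := (G.induce (D : Set V)).spanningCoe
  have hHG : ∀ {u v}, H.Adj u v ↔ G.Adj u v ∧ u ∈ D ∧ v ∈ D := by simp [H]
  have hH : ∀ M, IsMatchingSet H M → #M < n := fun M hM =>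
    hG M ⟨⟨fun e he => (hHG.1 (hM.1 e he)).1, hM.2⟩, fun e he e' he' =>
      hD _ (hHG.1 (hM.1 e he)).2.1 _ (hHG.1 (hM.1 e' he')).2.1⟩
  obtain ⟨S, hS⟩ := exists_card_add_two_le_card_connectedComponent hV hH
  obtain ⟨f, hfadj, hfrange⟩ := exists_label_of_connectedComponent_induce_compl H S
  have hcompl := card_add_card_compl S
  have hfiber : ∀ T : Finset ℕ, #{v ∈ D \ S | f v ∈ T} + 2 * #S + 2 ≤ 2 * n + #T := fun T => by
    have hmono : #{v ∈ D \ S | f v ∈ T} ≤ #{v ∈ Sᶜ | f v ∈ T} :=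
      card_le_card (filter_subset_filter _ fun v hv => mem_compl.2 (mem_sdiff.1 hv).2)
    have hbound := card_filter_mem_add_card_le hfrange T
    rw [card_range] at hbound
    omega
  refine ⟨S, f, fun u hu v hv huv => ?_, fun i => ?_, fun i j => ?_⟩
  · rw [mem_sdiff] at hu hv
    exact hfadj u hu.2 v hv.2 (hHG.2 ⟨huv, hu.1, hv.1⟩)
  · have := hfiber {i}
    simp only [mem_singleton, card_singleton] at this
    omega
  · have := hfiber {i, j}
    simp only [mem_insert, mem_singleton] at this
    have := card_le_two (a := i) (b := j)
    omega

variable [DecidableEq V] {D S : Finset V} {f : V → ℕ}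

theorem IsBarrier.card_lt (h : IsBarrier n G D S f) : #S < n := by
  have := h.card_fiber 0
  omega

theorem IsBarrier.smallFibers (h : IsBarrier n G D S f) (hn : 2 ≤ n) :
    SmallFibers n #S f (D \ S) where
  lt := h.card_lt
  card_fiber i := by
    have := h.card_fiber i
    omega
  card_two_fibers i j := by
    have := h.card_two_fibers i j
    omega

end Barriers

section Bicliques

variable {n : ℕ} {G : SimpleGraph V} {A B C D : Finset V}

theorem exists_isMatchingSet_subset_product (h : G.IsCompleteBetween A B) {m : ℕ}
    (hA : m ≤ #A) (hB : m ≤ #B) : ∃ M ⊆ A ×ˢ B, IsMatchingSet G M ∧ #M = m := by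
  obtain ⟨a⟩ : Nonempty (Fin m ↪ A) := Function.Embedding.nonempty_of_card_le (by simpa)
  obtain ⟨b⟩ : Nonempty (Fin m ↪ B) := Function.Embedding.nonempty_of_card_le (by simpa)
  have hne : ∀ i j, (a i : V) ≠ b j := fun i j => (h (a i).2 (b j).2).ne
  let e : Fin m ↪ V × V :=
    ⟨fun i => (a i, b i), fun i j hij => a.injective (Subtype.ext (congrArg Prod.fst hij))⟩
  refine ⟨univ.map e, ?_, ⟨?_, ?_⟩, by simp⟩
  · intro x hx
    obtain ⟨i, -, rfl⟩ := mem_map.1 hx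
    exact mem_product.2 ⟨(a i).2, (b i).2⟩
  · intro x hx
    obtain ⟨i, -, rfl⟩ := mem_map.1 hx
    exact h (a i).2 (b i).2
  · intro x hx y hy hxy
    obtain ⟨i, -, rfl⟩ := mem_map.1 hx
    obtain ⟨j, -, rfl⟩ := mem_map.1 hy
    have hij : i ≠ j := fun hij => hxy (by rw [hij])
    exact ⟨Subtype.coe_injective.ne (a.injective.ne hij), hne i j, (hne j i).symm,
      Subtype.coe_injective.ne (b.injective.ne hij)⟩

theorem IsMatchingSet.union [DecidableEq V] {M N : Finset (V × V)} (hM : IsMatchingSet G M)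
    (hN : IsMatchingSet G N) (hMN : ∀ v, Covers M v → ¬ Covers N v) :
    IsMatchingSet G (M ∪ N) := by
  have hne : ∀ {e f u v}, e ∈ M → f ∈ N → u = e.1 ∨ u = e.2 → v = f.1 ∨ v = f.2 → u ≠ v := by
    rintro e f u _ he hf hu hv rfl
    exact hMN u ⟨e, he, hu⟩ ⟨f, hf, hv⟩
  refine ⟨fun e he => ?_, fun e he f hf hef => ?_⟩
  · exact (mem_union.1 he).elim (hM.1 e) (hN.1 e)
  · rcases mem_union.1 he with he | he <;> rcases mem_union.1 hf with hf | hf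
    · exact hM.2 e he f hf hef
    · exact ⟨hne he hf (.inl rfl) (.inl rfl), hne he hf (.inl rfl) (.inr rfl),
        hne he hf (.inr rfl) (.inl rfl), hne he hf (.inr rfl) (.inr rfl)⟩
    · exact ⟨(hne hf he (.inl rfl) (.inl rfl)).symm, (hne hf he (.inr rfl) (.inl rfl)).symm,
        (hne hf he (.inl rfl) (.inr rfl)).symm, (hne hf he (.inr rfl) (.inr rfl)).symm⟩
    · exact hN.2 e he f hf hef

theorem reachable_of_isCompleteBetween (h : G.IsCompleteBetween A B) (hA : A.Nonempty)
    (hB : B.Nonempty) {u v : V} (hu : u ∈ A ∨ u ∈ B) (hv : v ∈ A ∨ v ∈ B) : G.Reachable u v := by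
  obtain ⟨a, ha⟩ := hA
  obtain ⟨b, hb⟩ := hB
  have hreach : ∀ w, w ∈ A ∨ w ∈ B → G.Reachable w a := by
    rintro w (hw | hw)
    · exact (h hw hb).reachable.trans (h ha hb).reachable.symm
    · exact (h ha hw).reachable.symm
  exact (hreach u hu).trans (hreach v hv).symm

theorem ConnMatchingFree.min_card_lt (hG : ConnMatchingFree G n) (h : G.IsCompleteBetween A B) :
    min #A #B < n := by
  obtain ⟨M, hMAB, hM, hcard⟩ :=
    exists_isMatchingSet_subset_product h (min_le_left #A #B) (min_le_right #A #B)
  have hmem : ∀ e ∈ M, e.1 ∈ A ∧ e.2 ∈ B := fun e he => mem_product.1 (hMAB he)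
  rw [← hcard]
  exact hG M ⟨hM, fun e he f hf => reachable_of_isCompleteBetween h ⟨_, (hmem e he).1⟩
    ⟨_, (hmem e he).2⟩ (.inl (hmem e he).1) (.inl (hmem f hf).1)⟩

theorem ConnMatchingFree.not_adj_of_two_isCompleteBetween (hG : ConnMatchingFree G n)
    (hAB : G.IsCompleteBetween A B) (hCD : G.IsCompleteBetween C D)
    (hA : A.Nonempty) (hB : B.Nonempty) (hC : C.Nonempty) (hD : D.Nonempty)
    (hdisj : ∀ v, v ∈ A ∨ v ∈ B → ¬ (v ∈ C ∨ v ∈ D)) (hcard : n ≤ min #A #B + min #C #D)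
    {u v : V} (hu : u ∈ A ∨ u ∈ B) (hv : v ∈ C ∨ v ∈ D) : ¬ G.Adj u v := by
  classical
  intro huv
  obtain ⟨M, hMAB, hM, hMcard⟩ :=
    exists_isMatchingSet_subset_product hAB (min_le_left #A #B) (min_le_right #A #B)
  obtain ⟨N, hNCD, hN, hNcard⟩ :=
    exists_isMatchingSet_subset_product hCD (min_le_left #C #D) (min_le_right #C #D)
  have hMmem : ∀ e ∈ M, e.1 ∈ A ∧ e.2 ∈ B := fun e he => mem_product.1 (hMAB he)
  have hNmem : ∀ e ∈ N, e.1 ∈ C ∧ e.2 ∈ D := fun e he => mem_product.1 (hNCD he)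
  have hcover : ∀ w, Covers M w → ¬ Covers N w := by
    rintro w ⟨e, he, hwe⟩ ⟨f, hf, hwf⟩
    have hwAB : w ∈ A ∨ w ∈ B := by rcases hwe with rfl | rfl <;> simp [hMmem e he]
    have hwCD : w ∈ C ∨ w ∈ D := by rcases hwf with rfl | rfl <;> simp [hNmem f hf]
    exact hdisj w hwAB hwCD
  have hMN : Disjoint M N := disjoint_left.2 fun e heM heN =>
    hcover e.1 ⟨e, heM, .inl rfl⟩ ⟨e, heN, .inl rfl⟩
  have hreach : ∀ e ∈ M ∪ N, G.Reachable e.1 u := by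
    intro e he
    rcases mem_union.1 he with he | he
    · exact reachable_of_isCompleteBetween hAB hA hB (.inl (hMmem e he).1) hu
    · exact (reachable_of_isCompleteBetween hCD hC hD (.inl (hNmem e he).1) hv).trans
        huv.reachable.symm
  have := hG (M ∪ N) ⟨hM.union hN hcover, fun e he f hf => (hreach e he).trans (hreach f hf).symm⟩
  rw [card_union_of_disjoint hMN] at this
  omega

theorem IsBarrier.subset_of_isCompleteBetween [DecidableEq V] {S : Finset V} {f : V → ℕ}
    (hS : IsBarrier n G (A ∪ B) S f) (hAB : G.IsCompleteBetween A B) (hA : n ≤ #A)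
    (hcard : 2 * n ≤ #A + #B) : B ⊆ S := by
  by_contra hBS
  obtain ⟨b, hb, hbS⟩ := not_subset.1 hBS
  obtain ⟨a, ha, haS⟩ := exists_mem_notMem_of_card_lt_card (hS.card_lt.trans_le hA)
  have hadj : ∀ x ∈ A, x ∉ S → ∀ y ∈ B, y ∉ S → f x = f y := fun x hx hxS y hy hyS =>
    hS.eq_of_adj x (by simp [hx, hxS]) y (by simp [hy, hyS]) (hAB hx hy)
  have hconst : ∀ v ∈ (A ∪ B) \ S, f v = f a := by
    intro v hv
    simp only [mem_sdiff, mem_union] at hv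
    rcases hv with ⟨hvA | hvB, hvS⟩
    · exact (hadj v hvA hvS b hb hbS).trans (hadj a ha haS b hb hbS).symm
    · exact (hadj a ha haS v hvB hvS).symm
  have hlt := hS.card_fiber (f a)
  rw [filter_true_of_mem hconst] at hlt
  have := le_card_sdiff S (A ∪ B)
  have := card_union_of_disjoint (disjoint_coe.1 hAB.disjoint)
  omega

theorem ConnMatchingFree.exists_isBarrier_of_isCompleteBetween [Finite V] [DecidableEq V]
    (hG : ConnMatchingFree G n) (hAB : G.IsCompleteBetween A B) (hB : B.Nonempty) (hA : n ≤ #A)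
    (hcard : 2 * n ≤ #A + #B) : ∃ S f, IsBarrier n G (A ∪ B) S f ∧ B ⊆ S := by
  have := Fintype.ofFinite V
  have hA₀ : A.Nonempty := card_pos.1 (hG.pos.trans_le hA)
  have hV : 2 * n ≤ Fintype.card V := by
    have := card_le_univ (A ∪ B)
    have := card_union_of_disjoint (disjoint_coe.1 hAB.disjoint)
    omega
  obtain ⟨S, f, hS⟩ := hG.exists_isBarrier hV (D := A ∪ B) fun u hu v hv =>
    reachable_of_isCompleteBetween hAB hA₀ hB (mem_union.1 hu) (mem_union.1 hv)
  exact ⟨S, f, hS, hS.subset_of_isCompleteBetween hAB hA hcard⟩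

variable {G₁ G₂ G₃ : SimpleGraph V} {B₁ B₂ B₃ : Finset V}

theorem ConnMatchingFree.card_add_two_lt_of_three_isCompleteBetween [Fintype V]
    (hn : 2 ≤ n) (hcover : ∀ u v, u ≠ v → G₁.Adj u v ∨ G₂.Adj u v ∨ G₃.Adj u v)
    (h₁ : ConnMatchingFree G₁ n) (h₂ : ConnMatchingFree G₂ n) (h₃ : ConnMatchingFree G₃ n)
    (hA : n ≤ #A) (hB₁ : B₁.Nonempty) (hB₂ : B₂.Nonempty) (hB₃ : B₃.Nonempty)
    (hAB₁ : G₁.IsCompleteBetween A B₁) (hAB₂ : G₂.IsCompleteBetween A B₂)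
    (hAB₃ : G₃.IsCompleteBetween A B₃) (hABs : ∀ v, v ∈ A ∨ v ∈ B₁ ∨ v ∈ B₂ ∨ v ∈ B₃) :
    Fintype.card V + 2 < 4 * n := by
  classical
  by_contra! hV
  have hcardB₁ := h₁.min_card_lt hAB₁
  have hcardB₂ := h₂.min_card_lt hAB₂
  have hcardB₃ := h₃.min_card_lt hAB₃
  have hcard : Fintype.card V ≤ #A + #B₁ + #B₂ + #B₃ := by
    have huniv : univ = A ∪ B₁ ∪ B₂ ∪ B₃ := by grind
    rw [← card_univ, huniv]
    grw [card_union_le, card_union_le, card_union_le]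
  obtain ⟨R, f, hR, hBR⟩ := h₁.exists_isBarrier_of_isCompleteBetween hAB₁ hB₁ hA (by omega)
  obtain ⟨S, g, hS, hBS⟩ := h₂.exists_isBarrier_of_isCompleteBetween hAB₂ hB₂ hA (by omega)
  obtain ⟨T, h, hT, hBT⟩ := h₃.exists_isBarrier_of_isCompleteBetween hAB₃ hB₃ hA (by omega)
  let W := (R ∪ S ∪ T)ᶜ
  have hWA : ∀ v ∈ W, v ∈ A ∧ v ∉ R ∧ v ∉ S ∧ v ∉ T := by
    intro v hv
    simp only [W, mem_compl, mem_union, not_or] at hv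
    have := hABs v
    have := @hBR v
    have := @hBS v
    have := @hBT v
    tauto
  have hWR : W ⊆ (A ∪ B₁) \ R := fun v hv => by simp [hWA v hv]
  have hWS : W ⊆ (A ∪ B₂) \ S := fun v hv => by simp [hWA v hv]
  have hWT : W ⊆ (A ∪ B₃) \ T := fun v hv => by simp [hWA v hv]
  have hW := ((hR.smallFibers hn).mono hWR).card_add_lt_of_three_labellings
    ((hS.smallFibers hn).mono hWS) hT.card_lt
    (fun i => (Nat.add_le_add_right (card_le_card (filter_subset_filter _ hWT)) _).trans_lt
      (hT.card_fiber i))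
    fun x hx y hy hxy => (hcover x y hxy).imp (hR.eq_of_adj x (hWR hx) y (hWR hy))
      (.imp (hS.eq_of_adj x (hWS hx) y (hWS hy)) (hT.eq_of_adj x (hWT hx) y (hWT hy)))
  have hWcard : #(R ∪ S ∪ T) + #W = Fintype.card V := card_add_card_compl _
  have := card_union_le (R ∪ S) T
  have := card_union_le R S
  omega

end Bicliques

section Cuts

variable {n : ℕ} {G G₁ G₂ G₃ : SimpleGraph V}

/-- `X` is a union of connected components of `G`. -/
def IsAdjClosed (G : SimpleGraph V) (X : Finset V) : Prop :=
  ∀ u ∈ X, ∀ v ∉ X, ¬ G.Adj u v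

theorem IsAdjClosed.sdiff [DecidableEq V] {X C : Finset V} (hX : IsAdjClosed G X)
    (hC : IsAdjClosed G C) : IsAdjClosed G (X \ C) := by
  intro u hu v hv huv
  rw [mem_sdiff] at hu hv
  by_cases hvX : v ∈ X
  · exact hC v (by tauto) u hu.2 huv.symm
  · exact hX u hu.1 v hvX huv

theorem IsAdjClosed.adj_of_separated_twice {X Y : Finset V} (hX : IsAdjClosed G₁ X)
    (hY : IsAdjClosed G₂ Y) (hcover : ∀ u v, u ≠ v → G₁.Adj u v ∨ G₂.Adj u v ∨ G₃.Adj u v)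
    {u v : V} (hu : u ∈ X) (hv : v ∉ X) (huv : u ∈ Y ↔ v ∉ Y) : G₃.Adj u v := by
  have h₁ := hX u hu v hv
  have h₂ : ¬ G₂.Adj u v := by
    by_cases huY : u ∈ Y
    · exact hY u huY v (huv.1 huY)
    · exact fun h => hY v (not_not.1 (mt huv.2 huY)) u huY h.symm
  have := hcover u v (fun h => hv (h ▸ hu))
  tauto

variable [DecidableEq V]

/-- The labelling of `V` by `f` on `D` and by the extra label `none` outside `D`. -/
def partialLabel (D : Finset V) (f : V → ℕ) (v : V) : Option ℕ :=
  if v ∈ D then some (f v) else none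

variable [Fintype V]

/-- A partition of the vertices into `X` and `Xᶜ` that no edge of `G` crosses and whose two sides
have at least `n` vertices each. -/
structure IsLargeCut (n : ℕ) (G : SimpleGraph V) (X : Finset V) : Prop where
  isAdjClosed : IsAdjClosed G X
  le_card : n ≤ #X
  le_card_compl : n ≤ #Xᶜ

/-- The analogue of `IsBarrier` for the whole graph, when all but fewer than `n` vertices lie in
one connected component; the vertices outside that component share a single label. -/
structure IsSpanningBarrier (n : ℕ) (G : SimpleGraph V) (S : Finset V) (f : V → Option ℕ) :
    Prop where
  eq_of_adj : ∀ u ∉ S, ∀ v ∉ S, G.Adj u v → f u = f v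
  smallFibers : SmallFibers n #S f Sᶜ

theorem exists_reachable_or_isLargeCut (hn : 0 < n) (hV : 3 * n ≤ Fintype.card V + 2) :
    (∃ D : Finset V, (∀ u ∈ D, ∀ v ∈ D, G.Reachable u v) ∧ IsAdjClosed G D ∧ #Dᶜ < n) ∨
      ∃ X, IsLargeCut n G X := by
  classical
  let F : Finset (Finset V) := {X | IsAdjClosed G X ∧ n ≤ #X}
  have hF : ∀ X, X ∈ F ↔ IsAdjClosed G X ∧ n ≤ #X := by simp [F]
  have huniv : univ ∈ F := (hF univ).2 ⟨by simp [IsAdjClosed], by rw [card_univ]; omega⟩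
  obtain ⟨X, hXF, hXmin⟩ := exists_min_image F card ⟨univ, huniv⟩
  obtain ⟨hX, hXcard⟩ := (hF X).1 hXF
  obtain ⟨x, hx⟩ : X.Nonempty := card_pos.1 (hn.trans_le hXcard)
  let C : Finset V := {v ∈ X | G.Reachable x v}
  have hmemC : ∀ v, v ∈ C ↔ v ∈ X ∧ G.Reachable x v := by simp [C]
  have hC : IsAdjClosed G C := by
    intro u hu v hv huv
    rw [hmemC] at hu hv
    exact hX u hu.1 v (fun hvX => hv ⟨hvX, hu.2.trans huv.reachable⟩) huv
  by_cases hCcard : n ≤ #C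
  · by_cases hCcompl : n ≤ #Cᶜ
    · exact .inr ⟨C, hC, hCcard, hCcompl⟩
    · exact .inl ⟨C, fun u hu v hv => ((hmemC u).1 hu).2.symm.trans ((hmemC v).1 hv).2, hC,
        not_le.1 hCcompl⟩
  · have hCpos : 0 < #C := card_pos.2 ⟨x, (hmemC x).2 ⟨hx, .refl x⟩⟩
    have hsplit : #(X \ C) + #C = #X := card_sdiff_add_card_eq_card (filter_subset _ _)
    have hsdiff : #(X \ C) < n := by
      by_contra! hle
      have := hXmin _ ((hF _).2 ⟨hX.sdiff hC, hle⟩)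
      omega
    have := card_add_card_compl X
    exact .inr ⟨X, hX, hXcard, by omega⟩

theorem IsBarrier.smallFibers_partialLabel {D S : Finset V} {f : V → ℕ}
    (hS : IsBarrier n G D S f) (hn : 2 ≤ n) (hD : #Dᶜ < n) :
    SmallFibers n #S (partialLabel D f) Sᶜ := by
  have hlt := hS.card_lt
  have hnone : #{v ∈ Sᶜ | partialLabel D f v = none} ≤ #Dᶜ := card_le_card fun v hv => by
    simpa [partialLabel] using (mem_filter.1 hv).2
  have hsome : ∀ i, #{v ∈ Sᶜ | partialLabel D f v = some i} = #{v ∈ D \ S | f v = i} :=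
    fun i => congrArg card <| by
      ext v
      simp only [partialLabel, Option.ite_none_right_eq_some, Option.some.injEq, mem_filter,
        mem_compl, mem_sdiff]
      tauto
  have hsome_some : ∀ i j, #{v ∈ Sᶜ | partialLabel D f v = some i ∨ partialLabel D f v = some j} =
      #{v ∈ D \ S | f v = i ∨ f v = j} :=
    fun i j => congrArg card <| by
      ext v
      simp only [partialLabel, Option.ite_none_right_eq_some, Option.some.injEq, mem_filter,
        mem_compl, mem_sdiff]
      tauto
  have hor : ∀ i j, #{v ∈ Sᶜ | partialLabel D f v = i ∨ partialLabel D f v = j} ≤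
      #{v ∈ Sᶜ | partialLabel D f v = i} + #{v ∈ Sᶜ | partialLabel D f v = j} := fun i j => by
    rw [filter_or]
    exact card_union_le _ _
  refine ⟨hlt, ?_, ?_⟩
  · rintro (_ | i)
    · omega
    · have := hsome i
      have := hS.card_fiber i
      omega
  · rintro (_ | i) (_ | j)
    · simp only [or_self]
      omega
    · have := hor none (some j)
      have := hsome j
      have := hS.card_fiber j
      omega
    · have := hor (some i) none
      have := hsome i
      have := hS.card_fiber i
      omega
    · have := hsome_some i j
      have := hS.card_two_fibers i j
      omega

theorem IsBarrier.isSpanningBarrier {D S : Finset V} {f : V → ℕ} (hS : IsBarrier n G D S f)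
    (hn : 2 ≤ n) (hD : IsAdjClosed G D) (hDcard : #Dᶜ < n) :
    IsSpanningBarrier n G S (partialLabel D f) where
  eq_of_adj u hu v hv huv := by
    by_cases huD : u ∈ D <;> by_cases hvD : v ∈ D
    · simpa [partialLabel, huD, hvD] using hS.eq_of_adj u (by simp [*]) v (by simp [*]) huv
    · exact absurd huv (hD u huD v hvD)
    · exact absurd huv.symm (hD v hvD u huD)
    · simp [partialLabel, huD, hvD]
  smallFibers := hS.smallFibers_partialLabel hn hDcard

theorem ConnMatchingFree.exists_isSpanningBarrier_or_isLargeCut (hG : ConnMatchingFree G n)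
    (hn : 2 ≤ n) (hV : 3 * n ≤ Fintype.card V + 2) :
    (∃ S f, IsSpanningBarrier n G S f) ∨ ∃ X, IsLargeCut n G X := by
  refine (exists_reachable_or_isLargeCut hG.pos hV).imp_left ?_
  rintro ⟨D, hDreach, hD, hDcard⟩
  obtain ⟨S, f, hS⟩ := hG.exists_isBarrier (by omega) hDreach
  exact ⟨S, _, hS.isSpanningBarrier hn hD hDcard⟩

theorem ConnMatchingFree.card_add_two_lt_of_isSpanningBarrier
    (hcover : ∀ u v, u ≠ v → G₁.Adj u v ∨ G₂.Adj u v ∨ G₃.Adj u v) (h₃ : ConnMatchingFree G₃ n)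
    {S T : Finset V} {f g : V → Option ℕ} (hS : IsSpanningBarrier n G₁ S f)
    (hT : IsSpanningBarrier n G₂ T g) : Fintype.card V + 2 < 4 * n := by
  classical
  by_contra! hV
  let W := (S ∪ T)ᶜ
  have hW : ∀ v ∈ W, v ∉ S ∧ v ∉ T := by simp [W]
  have hWcard : #(S ∪ T) + #W = Fintype.card V := card_add_card_compl _
  have hST := card_union_le S T
  have hf : SmallFibers n #S f W := hS.smallFibers.mono (compl_subset_compl.2 subset_union_left)
  have hg : SmallFibers n #T g W := hT.smallFibers.mono (compl_subset_compl.2 subset_union_right)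
  have hlabel : ∀ u ∈ W, ∀ v ∈ W, u ≠ v → f u = f v ∨ g u = g v ∨ G₃.Adj u v :=
    fun u hu v hv huv => (hcover u v huv).imp (hS.eq_of_adj u (hW u hu).1 v (hW v hv).1)
      (.imp_left (hT.eq_of_adj u (hW u hu).2 v (hW v hv).2))
  have hreach : ∀ u ∈ W, ∀ v ∈ W, G₃.Reachable u v := by
    intro u hu v hv
    by_contra huv
    have hsplit := filter_union_filter_not_eq (fun w => G₃.Reachable u w) W
    have hcut := SmallFibers.card_union_add_lt (hsplit.symm ▸ hf) (hsplit.symm ▸ hg)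
      ⟨u, mem_filter.2 ⟨hu, .refl u⟩⟩ ⟨v, mem_filter.2 ⟨hv, huv⟩⟩ fun x hx y hy => by
        rw [mem_filter] at hx hy
        have hxy : ¬ G₃.Adj x y := fun hxy => hy.2 (hx.2.trans hxy.reachable)
        have hne : x ≠ y := fun h => hy.2 (h ▸ hx.2)
        simpa only [hxy, or_false] using hlabel x hx.1 y hy.1 hne
    rw [hsplit] at hcut
    omega
  have := h₃.pos
  obtain ⟨R, h, hR⟩ := h₃.exists_isBarrier (by omega) hreach
  have hlt := (hf.mono (sdiff_subset (t := R))).card_add_lt_of_three_labellings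
    (hg.mono sdiff_subset) hR.card_lt hR.card_fiber fun x hx y hy hxy =>
      (hlabel x (mem_sdiff.1 hx).1 y (mem_sdiff.1 hy).1 hxy).imp_right
        (.imp_right (hR.eq_of_adj x hx y hy))
  have := le_card_sdiff R W
  omega

theorem IsLargeCut.compl {X : Finset V} (hX : IsLargeCut n G X) : IsLargeCut n G Xᶜ where
  isAdjClosed u hu v hv huv :=
    hX.isAdjClosed v (notMem_compl.1 hv) u (mem_compl.1 hu) huv.symm
  le_card := hX.le_card_compl
  le_card_compl := by simpa using hX.le_card

theorem IsLargeCut.le_card_sdiff_add_card_compl_union {X : Finset V} (hX : IsLargeCut n G X)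
    (Y : Finset V) : n ≤ #(Y \ X) + #(X ∪ Y)ᶜ := by
  have hsub : Xᶜ ⊆ (Y \ X) ∪ (X ∪ Y)ᶜ := fun v => by
    simp only [mem_compl, mem_union, mem_sdiff]
    tauto
  exact hX.le_card_compl.trans ((card_le_card hsub).trans (card_union_le _ _))

theorem ConnMatchingFree.card_add_two_lt_of_isLargeCut_of_le_card_inter (hn : 2 ≤ n)
    (hcover : ∀ u v, u ≠ v → G₁.Adj u v ∨ G₂.Adj u v ∨ G₃.Adj u v)
    (h₁ : ConnMatchingFree G₁ n) (h₂ : ConnMatchingFree G₂ n) (h₃ : ConnMatchingFree G₃ n)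
    {X Y : Finset V} (hX : IsLargeCut n G₁ X) (hY : IsLargeCut n G₂ Y) (hXY : n ≤ #(X ∩ Y)) :
    Fintype.card V + 2 < 4 * n := by
  have hdiag : G₃.IsCompleteBetween (X ∩ Y : Finset V) ((X ∪ Y)ᶜ : Finset V) := by
    intro u hu v hv
    simp only [mem_coe, mem_inter, mem_compl, mem_union, not_or] at hu hv
    exact hX.isAdjClosed.adj_of_separated_twice hY.isAdjClosed hcover hu.1 hv.1 (by tauto)
  have hantidiag : G₃.IsCompleteBetween (X \ Y : Finset V) (Y \ X : Finset V) := by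
    intro u hu v hv
    simp only [mem_coe, mem_sdiff] at hu hv
    exact hX.isAdjClosed.adj_of_separated_twice hY.isAdjClosed hcover hu.1 hv.2 (by tauto)
  have hdiag_lt := h₃.min_card_lt hdiag
  have hantidiag_lt := h₃.min_card_lt hantidiag
  have hcardX := hX.le_card_sdiff_add_card_compl_union Y
  have hcardY := hY.le_card_sdiff_add_card_compl_union X
  rw [union_comm] at hcardY
  have ha : (X ∩ Y).Nonempty := card_pos.1 (by omega)
  have hb : (X \ Y).Nonempty := card_pos.1 (by omega)
  have hc : (Y \ X).Nonempty := card_pos.1 (by omega)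
  have hd : (X ∪ Y)ᶜ.Nonempty := card_pos.1 (by omega)
  have hnot_adj : ∀ u ∈ X ∩ Y, ∀ v, v ∈ X \ Y ∨ v ∈ Y \ X → ¬ G₃.Adj u v := fun u hu v hv =>
    h₃.not_adj_of_two_isCompleteBetween hdiag hantidiag ha hd hb hc
      (fun w => by simp only [mem_inter, mem_compl, mem_union, mem_sdiff]; tauto)
      (by omega) (.inl hu) hv
  refine h₁.card_add_two_lt_of_three_isCompleteBetween hn hcover h₂ h₃ hXY hb hc hd ?_ ?_ hdiag ?_
  · intro u hu v hv
    have := hnot_adj u hu v (.inl hv)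
    simp only [mem_coe, mem_inter, mem_sdiff] at hu hv
    have := hY.isAdjClosed u hu.2 v hv.2
    have := hcover u v (fun h => hv.2 (h ▸ hu.2))
    tauto
  · intro u hu v hv
    have := hnot_adj u hu v (.inr hv)
    simp only [mem_coe, mem_inter, mem_sdiff] at hu hv
    have := hX.isAdjClosed u hu.1 v hv.2
    have := hcover u v (fun h => hv.2 (h ▸ hu.1))
    tauto
  · intro v
    simp only [mem_inter, mem_compl, mem_union, mem_sdiff]
    tauto

theorem ConnMatchingFree.card_add_two_lt_of_isLargeCut (hn : 2 ≤ n)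
    (hcover : ∀ u v, u ≠ v → G₁.Adj u v ∨ G₂.Adj u v ∨ G₃.Adj u v)
    (h₁ : ConnMatchingFree G₁ n) (h₂ : ConnMatchingFree G₂ n) (h₃ : ConnMatchingFree G₃ n)
    {X Y : Finset V} (hX : IsLargeCut n G₁ X) (hY : IsLargeCut n G₂ Y) :
    Fintype.card V + 2 < 4 * n := by
  by_contra! hV
  have hcell : ∀ {X Y}, IsLargeCut n G₁ X → IsLargeCut n G₂ Y → #(X ∩ Y) < n := by
    intro X Y hX hY
    by_contra! hXY
    have := card_add_two_lt_of_isLargeCut_of_le_card_inter hn hcover h₁ h₂ h₃ hX hY hXY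
    omega
  have := hcell hX hY
  have := hcell hX hY.compl
  have := hcell hX.compl hY
  have := hcell hX.compl hY.compl
  have := card_inter_add_card_sdiff X Y
  have := card_inter_add_card_sdiff Xᶜ Y
  have := card_add_card_compl X
  rw [← sdiff_eq_inter_compl] at *
  omega

end Cuts

theorem exists_pair_of_forall_or {P Q : Fin 3 → Prop} (h : ∀ i, P i ∨ Q i) :
    ∃ i j k, (∀ l, l = i ∨ l = j ∨ l = k) ∧ (P i ∧ P j ∨ Q i ∧ Q j) := by
  rcases h 0 with h₀ | h₀ <;> rcases h 1 with h₁ | h₁ <;> rcases h 2 with h₂ | h₂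
  all_goals first
    | exact ⟨0, 1, 2, by decide, by tauto⟩
    | exact ⟨0, 2, 1, by decide, by tauto⟩
    | exact ⟨1, 2, 0, by decide, by tauto⟩

theorem stmt5_general [Fintype V] (n : ℕ) (hV : 4 * n ≤ Fintype.card V + 2)
    (G : Fin 3 → SimpleGraph V) (hG : ∀ u v, u ≠ v → ∃ i, (G i).Adj u v) :
    ∃ i, ∃ M, ConnMatching (G i) M ∧ n ≤ #M := by
  classical
  by_contra! hfree
  have hfree : ∀ i, ConnMatchingFree (G i) n := hfree
  have hpos := (hfree 0).pos
  obtain ⟨u, v, huv⟩ := Fintype.one_lt_card_iff.1 (show 1 < Fintype.card V by omega)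
  obtain ⟨c, hc⟩ := hG u v huv
  have hn : 2 ≤ n := (hfree c).two_le_of_adj hc
  obtain ⟨i, j, k, hijk, hpair⟩ := exists_pair_of_forall_or fun i =>
    (hfree i).exists_isSpanningBarrier_or_isLargeCut hn (by omega)
  have hcover : ∀ u v, u ≠ v → (G i).Adj u v ∨ (G j).Adj u v ∨ (G k).Adj u v := by
    intro u v huv
    obtain ⟨l, hl⟩ := hG u v huv
    rcases hijk l with rfl | rfl | rfl <;> tauto
  rcases hpair with ⟨⟨S, f, hS⟩, T, g, hT⟩ | ⟨⟨X, hX⟩, Y, hY⟩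
  · exact hV.not_gt ((hfree k).card_add_two_lt_of_isSpanningBarrier hcover hS hT)
  · exact hV.not_gt
      ((hfree i).card_add_two_lt_of_isLargeCut hn hcover (hfree j) (hfree k) hX hY)

/-- In every 3-edge-coloring of `K_{4n-2}` there is a monochromatic connected
matching with at least `n` edges. -/
theorem stmt5 (n : ℕ) (hn : 1 ≤ n)
    (c : Sym2 (Fin (4 * n - 2)) → Fin 3) :
    ∃ i : Fin 3, ∃ M,
      ConnMatching (colorSub (⊤ : SimpleGraph (Fin (4 * n - 2))) c i) M ∧
      n ≤ M.card :=
  stmt5_general n (by rw [Fintype.card_fin]; omega) _ fun u v huv =>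
    ⟨c s(u, v), by simp [colorSub, huv]⟩
end

section
/- Let G = K_{2x1 + x2 + x3 - 2} with 1 ≤ x2, x3 ≤ x1, with a 3-edge-coloring E1 ∪ E2 ∪ E3. Suppose for some i ∈ {2,3} the graph Gi = G[Ei] has no connected component with more than x1 + xi - 1 vertices. Then for some j ∈ {1,2,3}, Gj contains a connected matching of size at least xj. -/
open SimpleGraph

variable {V : Type*}

/-! Deleting the edges inside the components of `Gᵢ` leaves a complete multipartite graph whose
edges have the other two colors `R` and `B`. Unconnected matchings of sizes `a` in `R` or `b` in `B`
come by induction on `a` and `b`: delete the three vertices of a path with one edge of each color,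
chosen to meet every part that is too large to survive intact (there are at most two); when there is
no such path, one color contains a biclique or a complete multipartite graph that is large enough.

If, say, all edges of `R` lie in one component, give `R` all edges other than the `B`-edges inside a
largest component `C` of `B`. A matching of `B` found in this new coloring lies in `C`. A matching
of the enlarged `R` is exchanged back into `R`: a `B`-edge used in it lies in some component `D`
with `|D| ≤ |C|`, so either another edge of the matching avoids `D` or some vertex of `C` is
uncovered, and both allow the `B`-edge to be replaced by edges between components of `B`, which are
in `R`.

Otherwise a union `X` of components of `R` and a union `W` of components of `B` cut the vertices
into a 2 × 2 grid. Opposite cells see each other in no color and so lie in a common part; hence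
adjacent cells span bicliques, alternately in `R` and in `B`, and counting the two diagonals shows
that one of the four bicliques is large enough.
-/

section Matching

open Finset

variable {G G' : SimpleGraph V} {M M' : Finset (V × V)} {S A B : Finset V} {k : ℕ}
  {u v w x y : V}

lemma IsMatchingSet.empty (G : SimpleGraph V) : IsMatchingSet G ∅ :=
  ⟨by simp, by simp⟩

lemma IsMatchingSet.subset (hM : IsMatchingSet G M) (h : M' ⊆ M) : IsMatchingSet G M' :=
  ⟨fun e he => hM.1 e (h he), fun e he f hf => hM.2 e (h he) f (h hf)⟩

lemma IsMatchingSet.of_forall_adj (hM : IsMatchingSet G M) (h : ∀ e ∈ M, G'.Adj e.1 e.2) :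
    IsMatchingSet G' M :=
  ⟨h, hM.2⟩

lemma ConnMatching.mono (hM : ConnMatching G M) (h : G ≤ G') : ConnMatching G' M :=
  ⟨hM.1.of_forall_adj fun e he => h (hM.1.1 e he), fun e he f hf => (hM.2 e he f hf).mono h⟩

lemma ConnMatching.empty (G : SimpleGraph V) : ConnMatching G ∅ :=
  ⟨.empty G, by simp⟩

lemma Covers.mono (hv : Covers M v) (h : M ⊆ M') : Covers M' v :=
  let ⟨e, he, hev⟩ := hv
  ⟨e, h he, hev⟩

lemma Covers.mem_of_subset_product (hv : Covers M v) (h : M ⊆ S ×ˢ S) : v ∈ S := by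
  obtain ⟨e, he, rfl | rfl⟩ := hv
  · exact (mem_product.1 (h he)).1
  · exact (mem_product.1 (h he)).2

section Surgery

variable [DecidableEq V]

lemma covers_insert : Covers (insert (u, v) M) w ↔ w = u ∨ w = v ∨ Covers M w := by
  simp [Covers, or_assoc]

lemma IsMatchingSet.not_covers_erase (hM : IsMatchingSet G M) (he : (x, y) ∈ M) :
    ¬ Covers (M.erase (x, y)) x ∧ ¬ Covers (M.erase (x, y)) y := by
  constructor
  all_goals
    rintro ⟨f, hf, h⟩
    have := hM.2 _ he f (mem_of_mem_erase hf) (ne_of_mem_erase hf).symm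
    tauto

lemma card_insert_of_not_covers (hu : ¬ Covers M u) : #(insert (u, v) M) = #M + 1 :=
  card_insert_of_notMem fun h => hu ⟨_, h, .inl rfl⟩

lemma IsMatchingSet.insert_pair (hM : IsMatchingSet G M) (huv : G.Adj u v) (hu : ¬ Covers M u)
    (hv : ¬ Covers M v) : IsMatchingSet G (insert (u, v) M) := by
  have hnew : ∀ f ∈ M, u ≠ f.1 ∧ u ≠ f.2 ∧ v ≠ f.1 ∧ v ≠ f.2 := fun f hf =>
    ⟨fun h => hu ⟨f, hf, .inl h⟩, fun h => hu ⟨f, hf, .inr h⟩,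
      fun h => hv ⟨f, hf, .inl h⟩, fun h => hv ⟨f, hf, .inr h⟩⟩
  refine ⟨(forall_mem_insert _ _ _).2 ⟨huv, hM.1⟩, fun e he f hf hef => ?_⟩
  rcases mem_insert.1 he with rfl | he <;> rcases mem_insert.1 hf with rfl | hf
  · exact absurd rfl hef
  · exact hnew f hf
  · obtain ⟨h₁, h₂, h₃, h₄⟩ := hnew e he
    exact ⟨h₁.symm, h₃.symm, h₂.symm, h₄.symm⟩
  · exact hM.2 e he f hf hef

lemma IsMatchingSet.exists_augment (hM : IsMatchingSet G M) (he : (x, y) ∈ M)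
    (hu : ¬ Covers M u) (hv : ¬ Covers M v) (huv : u ≠ v) (hux : G.Adj u x) (hvy : G.Adj v y) :
    ∃ M' ⊆ insert (u, x) (insert (v, y) M), IsMatchingSet G M' ∧ #M' = #M + 1 := by
  obtain ⟨hx', hy'⟩ := hM.not_covers_erase he
  have hx : Covers M x := ⟨_, he, .inl rfl⟩
  have hy : Covers M y := ⟨_, he, .inr rfl⟩
  have herase := erase_subset (x, y) M
  have hv' : ¬ Covers (M.erase (x, y)) v := fun h => hv (h.mono herase)
  have hu' : ¬ Covers (insert (v, y) (M.erase (x, y))) u := by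
    rw [covers_insert]
    rintro (h | rfl | h)
    exacts [huv h, hu hy, hu (h.mono herase)]
  have hx'' : ¬ Covers (insert (v, y) (M.erase (x, y))) x := by
    rw [covers_insert]
    rintro (rfl | rfl | h)
    exacts [hv hx, (hM.1 _ he).ne rfl, hx' h]
  refine ⟨_, insert_subset_insert _ (insert_subset_insert _ herase),
    ((hM.subset herase).insert_pair hvy hv' hy').insert_pair hux hu' hx'', ?_⟩
  rw [card_insert_of_not_covers hu', card_insert_of_not_covers hv', card_erase_add_one he]

lemma card_le_sum_card_inter (h : ∀ v ∈ S, Covers M v) :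
    #S ≤ ∑ e ∈ M, #({e.1, e.2} ∩ S) := by
  refine (card_le_card fun v hv => ?_).trans card_biUnion_le
  obtain ⟨e, he, hve⟩ := h v hv
  simp only [mem_biUnion, mem_inter, mem_insert, mem_singleton]
  exact ⟨e, he, hve, hv⟩

lemma IsMatchingSet.sum_card_inter_le (hM : IsMatchingSet G M) (S : Finset V) :
    ∑ e ∈ M, #({e.1, e.2} ∩ S) ≤ #S := by
  rw [← card_biUnion]
  · exact card_le_card (biUnion_subset.2 fun e _ => inter_subset_right)
  · intro e he f hf hef
    obtain ⟨h₁, h₂, h₃, h₄⟩ := hM.2 e he f hf hef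
    refine Disjoint.mono inter_subset_left inter_subset_left ?_
    simp [h₁.symm, h₂.symm, h₃.symm, h₄.symm]

end Surgery

lemma IsMatchingSet.exists_mem_not_covers (hM : IsMatchingSet G M) (hdisj : Disjoint A B)
    (hAB : #B ≤ #A) (hmeet : ∀ e ∈ M, e.1 ∈ B ∨ e.2 ∈ B) (he : (x, y) ∈ M) (hx : x ∈ B)
    (hy : y ∈ B) : ∃ v ∈ A, ¬ Covers M v := by
  classical
  by_contra! hcov
  have hA : ∀ {v}, v ∈ B → v ∉ A := fun hvB hvA => disjoint_left.1 hdisj hvA hvB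
  have hle : ∀ e ∈ M, #({e.1, e.2} ∩ A) ≤ #({e.1, e.2} ∩ B) := by
    intro e he
    have hpos : 0 < #({e.1, e.2} ∩ B) := by
      rw [card_pos]
      rcases hmeet e he with h | h
      · exact ⟨e.1, by simp [h]⟩
      · exact ⟨e.2, by simp [h]⟩
    refine le_trans ?_ hpos
    rcases hmeet e he with h | h
    · rw [insert_inter_of_notMem (hA h)]
      exact (card_le_card inter_subset_left).trans_eq (card_singleton _)
    · rw [pair_comm, insert_inter_of_notMem (hA h)]
      exact (card_le_card inter_subset_left).trans_eq (card_singleton _)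
  have hlt : #({x, y} ∩ A) < #({x, y} ∩ B) := by
    rw [insert_inter_of_notMem (hA hx), singleton_inter_of_notMem (hA hy), card_empty, card_pos]
    exact ⟨x, by simp [hx]⟩
  exact absurd hAB (not_le.2 ((card_le_sum_card_inter hcov).trans_lt
    ((sum_lt_sum hle ⟨_, he, hlt⟩).trans_le (hM.sum_card_inter_le B))))

/-- `G` has a matching of size `k` all of whose endpoints lie in `S`. -/
def HasMatchingIn (G : SimpleGraph V) (S : Finset V) (k : ℕ) : Prop :=
  ∃ M ⊆ S ×ˢ S, IsMatchingSet G M ∧ #M = k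

lemma hasMatchingIn_zero (G : SimpleGraph V) (S : Finset V) : HasMatchingIn G S 0 :=
  ⟨∅, empty_subset _, .empty G, card_empty⟩

lemma HasMatchingIn.succ (h : HasMatchingIn G A k) (hA : A ⊆ S) (huv : G.Adj u v)
    (hu : u ∈ S) (hv : v ∈ S) (huA : u ∉ A) (hvA : v ∉ A) : HasMatchingIn G S (k + 1) := by
  classical
  obtain ⟨M, hMA, hM, rfl⟩ := h
  have hu' : ¬ Covers M u := fun h => huA (h.mem_of_subset_product hMA)
  exact ⟨_,
    insert_subset (mk_mem_product hu hv) (hMA.trans (product_subset_product hA hA)),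
    hM.insert_pair huv hu' fun h => hvA (h.mem_of_subset_product hMA),
    card_insert_of_not_covers hu'⟩

lemma hasMatchingIn_of_biclique [DecidableEq V] (hAB : ∀ u ∈ A, ∀ v ∈ B, G.Adj u v)
    (hA : k ≤ #A) (hB : k ≤ #B) : HasMatchingIn G (A ∪ B) k := by
  induction k generalizing A B with
  | zero => exact hasMatchingIn_zero G _
  | succ k ih =>
    obtain ⟨u, hu⟩ : A.Nonempty := card_pos.1 (by omega)
    obtain ⟨v, hv⟩ : B.Nonempty := card_pos.1 (by omega)
    have hdisj : ∀ w ∈ A, w ∉ B := fun w hA hB => (hAB w hA w hB).ne rfl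
    have hrec : HasMatchingIn G (A.erase u ∪ B.erase v) k :=
      ih (fun x hx y hy => hAB x (mem_of_mem_erase hx) y (mem_of_mem_erase hy))
        (by rw [card_erase_of_mem hu]; omega) (by rw [card_erase_of_mem hv]; omega)
    refine hrec.succ (union_subset_union (erase_subset _ _) (erase_subset _ _))
      (hAB u hu v hv) (mem_union_left _ hu) (mem_union_right _ hv) ?_ ?_
    · simp [hdisj u hu]
    · simp [mt (hdisj v) (not_not.2 hv)]

lemma exists_connMatching_of_biclique (hAB : ∀ u ∈ A, ∀ v ∈ B, G.Adj u v)
    (hA : k ≤ #A) (hB : k ≤ #B) : ∃ M, ConnMatching G M ∧ #M = k := by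
  classical
  obtain ⟨M, hMAB, hM, hcard⟩ := hasMatchingIn_of_biclique hAB hA hB
  refine ⟨M, ⟨hM, fun e he f hf => ?_⟩, hcard⟩
  have hk : 0 < k := hcard ▸ card_pos.2 ⟨e, he⟩
  obtain ⟨u, hu⟩ : A.Nonempty := card_pos.1 (hk.trans_le hA)
  obtain ⟨v, hv⟩ : B.Nonempty := card_pos.1 (hk.trans_le hB)
  have hreach : ∀ w ∈ A ∪ B, G.Reachable u w := by
    intro w hw
    rcases mem_union.1 hw with hw | hw
    · exact (hAB u hu v hv).reachable.trans (hAB w hw v hv).symm.reachable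
    · exact (hAB u hu w hw).reachable
  exact (hreach _ (mem_product.1 (hMAB he)).1).symm.trans (hreach _ (mem_product.1 (hMAB hf)).1)

end Matching

section TwoColoring

open Finset

variable {ι : Type*}

/-- The complete multipartite graph whose parts are the fibres of `p`. -/
abbrev multipartite (p : V → ι) : SimpleGraph V := (⊤ : SimpleGraph ι).comap p

variable {G R B : SimpleGraph V} {p : V → ι}

lemma adj_or_adj_of_ne (hcov : multipartite p ≤ R ⊔ B) {x y : V} (hxy : p x ≠ p y) :
    R.Adj x y ∨ B.Adj x y :=
  hcov hxy

variable [DecidableEq ι] {S D : Finset V} {a b : ℕ} {r s t : ι} {u v : V}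

lemma hasMatchingIn_of_multipartite (hG : ∀ u ∈ S, ∀ v ∈ S, p u ≠ p v → G.Adj u v)
    (hS : 2 * a ≤ #S) (hout : ∀ r, a ≤ #{x ∈ S | p x ≠ r}) : HasMatchingIn G S a := by
  classical
  induction a with
  | zero => exact hasMatchingIn_zero G S
  | succ a ih =>
    obtain ⟨M, hMS, hM, rfl⟩ := ih (by omega) fun r => (Nat.le_succ a).trans (hout r)
    have hcovered : #{x ∈ S | Covers M x} ≤ 2 * #M := by
      rw [mul_comm, ← smul_eq_mul]
      refine (card_le_sum_card_inter fun x hx => (mem_filter.1 hx).2).trans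
        (sum_le_card_nsmul _ _ _ fun e _ => (card_le_card inter_subset_left).trans card_le_two)
    obtain ⟨u, hu, v, hv, huv⟩ : ∃ u ∈ {x ∈ S | ¬ Covers M x}, ∃ v ∈ {x ∈ S | ¬ Covers M x},
        u ≠ v := by
      rw [← one_lt_card]
      have := card_filter_add_card_filter_not (s := S) (Covers M ·)
      omega
    obtain ⟨huS, huM⟩ := mem_filter.1 hu
    obtain ⟨hvS, hvM⟩ := mem_filter.1 hv
    by_cases hw : ∃ w ∈ S, ¬ Covers M w ∧ p u ≠ p w
    · obtain ⟨w, hwS, hwM, huw⟩ := hw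
      exact ⟨_, insert_subset (mk_mem_product huS hwS) hMS,
        hM.insert_pair (hG u huS w hwS huw) huM hwM, card_insert_of_not_covers huM⟩
    push Not at hw
    have hcount : ∑ _e ∈ M, 1 < ∑ e ∈ M, #({e.1, e.2} ∩ {x ∈ S | p x ≠ p u}) := by
      rw [sum_const, smul_eq_mul, mul_one]
      refine (hout (p u)).trans (card_le_sum_card_inter fun x hx => ?_)
      rw [mem_filter] at hx
      exact by_contra fun h => hx.2 (hw x hx.1 h).symm
    obtain ⟨⟨x, y⟩, he, hlt⟩ := exists_lt_of_sum_lt hcount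
    have hsub : ({x, y} : Finset V) ⊆ {x ∈ S | p x ≠ p u} :=
      inter_eq_left.1 (eq_of_subset_of_card_le inter_subset_left (card_le_two.trans hlt))
    obtain ⟨hxS, hx⟩ := mem_filter.1 (hsub (mem_insert_self x {y}))
    obtain ⟨hyS, hy⟩ := mem_filter.1 (hsub (mem_insert_of_mem (mem_singleton_self y)))
    obtain ⟨M', hM'S, hM', hcard⟩ := hM.exists_augment he huM hvM huv (hG u huS x hxS hx.symm)
      (hG v hvS y hyS (hw v hvS hvM ▸ hy.symm))
    exact ⟨M', hM'S.trans (insert_subset (mk_mem_product huS hxS)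
      (insert_subset (mk_mem_product hvS hyS) hMS)), hM', hcard⟩

lemma card_part_add_card_part_le (hrs : r ≠ s) (hrt : r ≠ t) (hst : s ≠ t) :
    #{x ∈ S | p x = s} + #{x ∈ S | p x = t} ≤ #{x ∈ S | p x ≠ r} := by
  classical
  rw [← card_union_of_disjoint (disjoint_filter.2 fun x _ hs ht => hst (hs.symm.trans ht))]
  refine card_le_card (union_subset ?_ ?_) <;> refine monotone_filter_right S fun x _ hx => ?_
  · exact hx ▸ hrs.symm
  · exact hx ▸ hrt.symm

/-- The size conditions under which every two-coloring of the complete multipartite graph on `S` is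
shown to have a matching of size `a` in the first color or of size `b` in the second. -/
structure TwoColorBound (p : V → ι) (S : Finset V) (a b : ℕ) : Prop where
  two_mul_add_le : 2 * a + b ≤ #S + 1
  add_two_mul_le : a + 2 * b ≤ #S + 1
  add_le_outside (r : ι) : a + b ≤ #{x ∈ S | p x ≠ r} + 1

/-- The part of index `r` is as large as `TwoColorBound p S a b` allows: `a` and `b` can both be
lowered by one on deleting three vertices of `S` only if one of the three is in this part. -/
def IsTight (p : V → ι) (S : Finset V) (a b : ℕ) (r : ι) : Prop :=
  a + b = #{x ∈ S | p x ≠ r} + 1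

lemma IsTight.symm (hr : IsTight p S a b r) : IsTight p S b a r :=
  (add_comm b a).trans hr

namespace TwoColorBound

lemma symm (h : TwoColorBound p S a b) : TwoColorBound p S b a where
  two_mul_add_le := by have := h.add_two_mul_le; omega
  add_two_mul_le := by have := h.two_mul_add_le; omega
  add_le_outside r := by have := h.add_le_outside r; omega

lemma le_card_part (h : TwoColorBound p S a b) (hr : IsTight p S a b r) :
    a ≤ #{x ∈ S | p x = r} := by
  have hpart : #{x ∈ S | p x = r} + #{x ∈ S | p x ≠ r} = #S := card_filter_add_card_filter_not _
  have := h.two_mul_add_le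
  unfold IsTight at hr
  omega

lemma eq_or_eq_of_isTight (h : TwoColorBound p S a b) (hr : IsTight p S a b r)
    (hs : IsTight p S a b s) (hrs : r ≠ s) (ht : IsTight p S a b t) : t = r ∨ t = s := by
  by_contra! hne
  have hle := card_part_add_card_part_le (p := p) (S := S) hne.1 hne.2 hrs
  have has := h.le_card_part hs
  have hbr := h.symm.le_card_part hr.symm
  unfold IsTight at ht
  omega

lemma sdiff [DecidableEq V] (h : TwoColorBound p S (a + 1) (b + 1)) (hDS : D ⊆ S) (hD : #D = 3)
    (htight : ∀ r, IsTight p S (a + 1) (b + 1) r → r ∈ D.image p) :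
    TwoColorBound p (S \ D) a b := by
  have hcard := card_sdiff_add_card_eq_card hDS
  have h₁ := h.two_mul_add_le
  have h₂ := h.add_two_mul_le
  refine ⟨by omega, by omega, fun r => ?_⟩
  have hsplit : #{x ∈ S | p x ≠ r} ≤ #{x ∈ S \ D | p x ≠ r} + #{x ∈ D | p x ≠ r} := by
    conv_lhs => rw [← sdiff_union_of_subset hDS, filter_union]
    exact card_union_le _ _
  have hDr : #{x ∈ D | p x ≠ r} ≤ #D := card_filter_le _ _
  have hr := h.add_le_outside r
  by_cases ht : IsTight p S (a + 1) (b + 1) r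
  · obtain ⟨d, hd, hdr⟩ := mem_image.1 (htight r ht)
    have hlt : #{x ∈ D | p x ≠ r} < #D :=
      card_lt_card (filter_ssubset.2 ⟨d, hd, not_not.2 hdr⟩)
    omega
  · unfold IsTight at ht
    omega

lemma exists_ne_part (h : TwoColorBound p S a b) (hab : 1 < a + b) (r : ι) :
    ∃ v ∈ S, p v ≠ r := by
  have hr := h.add_le_outside r
  obtain ⟨v, hv⟩ : {x ∈ S | p x ≠ r}.Nonempty := card_pos.1 (by omega)
  exact ⟨v, mem_filter.1 hv⟩

lemma exists_pair_forall_isTight (h : TwoColorBound p S a b) (ha : 0 < a) (hb : 0 < b) :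
    ∃ u ∈ S, ∃ v ∈ S, p u ≠ p v ∧
      ∀ r, IsTight p S a b r → IsTight p S a b (p u) ∧ (r = p u ∨ r = p v) := by
  have hmem : ∀ r, IsTight p S a b r → ∃ w ∈ S, p w = r := fun r hr =>
    filter_nonempty_iff.1 (card_pos.1 (ha.trans_le (h.le_card_part hr)))
  by_cases htight : ∃ r, IsTight p S a b r
  · obtain ⟨_, hr⟩ := htight
    obtain ⟨u, hu, rfl⟩ := hmem _ hr
    by_cases hother : ∃ s, IsTight p S a b s ∧ s ≠ p u
    · obtain ⟨_, hs, hsu⟩ := hother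
      obtain ⟨v, hv, rfl⟩ := hmem _ hs
      exact ⟨u, hu, v, hv, hsu.symm, fun t ht => ⟨hr, h.eq_or_eq_of_isTight hr hs hsu.symm ht⟩⟩
    · push Not at hother
      obtain ⟨v, hv, hvu⟩ := h.exists_ne_part (by omega) (p u)
      exact ⟨u, hu, v, hv, hvu.symm, fun t ht => ⟨hr, .inl (hother t ht)⟩⟩
  · obtain ⟨u, hu⟩ : S.Nonempty := card_pos.1 (by have := h.two_mul_add_le; omega)
    obtain ⟨v, hv, hvu⟩ := h.exists_ne_part (by omega) (p u)
    exact ⟨u, hu, v, hv, hvu.symm, fun r hr => absurd ⟨r, hr⟩ htight⟩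

end TwoColorBound

section Cherry

variable [DecidableEq V]

/-- `D` consists of the three vertices of a path with one edge in `R` and the other in `B`. -/
def IsCherry (R B : SimpleGraph V) (D : Finset V) : Prop :=
  ∃ x y z, R.Adj x y ∧ B.Adj x z ∧ y ≠ z ∧ D = {x, y, z}

lemma IsCherry.symm (hD : IsCherry R B D) : IsCherry B R D := by
  obtain ⟨x, y, z, hxy, hxz, hyz, rfl⟩ := hD
  exact ⟨x, z, y, hxz, hxy, hyz.symm, congrArg (insert x) (pair_comm y z)⟩

lemma IsCherry.hasMatchingIn (hD : IsCherry R B D) (hDS : D ⊆ S)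
    (h : HasMatchingIn R (S \ D) a ∨ HasMatchingIn B (S \ D) b) :
    HasMatchingIn R S (a + 1) ∨ HasMatchingIn B S (b + 1) := by
  obtain ⟨x, y, z, hxy, hxz, -, rfl⟩ := hD
  have hx : x ∈ S := hDS (by simp)
  have hy : y ∈ S := hDS (by simp)
  have hz : z ∈ S := hDS (by simp)
  exact h.imp (fun h => h.succ sdiff_subset hxy hx hy (by simp) (by simp))
    fun h => h.succ sdiff_subset hxz hx hz (by simp) (by simp)

lemma IsCherry.card_eq_three (hD : IsCherry R B D) : #D = 3 := by
  obtain ⟨x, y, z, hxy, hxz, hyz, rfl⟩ := hD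
  exact Finset.card_eq_three.2 ⟨x, y, z, hxy.ne, hxz.ne, hyz, rfl⟩

lemma exists_isCherry_or_forall_adj (hcov : multipartite p ≤ R ⊔ B) (hu : u ∈ S) (hv : v ∈ S)
    (huv : p u ≠ p v) (hR : R.Adj u v) :
    (∃ D ⊆ S, IsCherry R B D ∧ p u ∈ D.image p ∧ p v ∈ D.image p) ∨
      ∀ x ∈ S, p x = p u → ∀ y ∈ S, p y ≠ p u → R.Adj x y := by
  refine or_iff_not_imp_left.2 fun hno => ?_
  have hext : ∀ x ∈ S, ∀ y ∈ S, ∀ z ∈ S, p u ∈ ({x, y, z} : Finset V).image p →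
      p v ∈ ({x, y, z} : Finset V).image p → R.Adj x y → p x ≠ p z → R.Adj x z := by
    intro x hx y hy z hz hPu hPv hxy hxz
    by_cases hyz : y = z
    · exact hyz ▸ hxy
    · exact (adj_or_adj_of_ne hcov hxz).resolve_right fun hB =>
        hno ⟨{x, y, z}, by simp [insert_subset_iff, *], ⟨x, y, z, hxy, hB, hyz, rfl⟩, hPu, hPv⟩
  intro x hx hxu y hy hyu
  have hvx : R.Adj v x :=
    hext v hv u hu x hx (by simp) (by simp) hR.symm (hxu ▸ huv.symm)
  exact hext x hx v hv y hy (by simp [hxu]) (by simp) hvx.symm (hxu ▸ hyu.symm)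

lemma TwoColorBound.hasMatchingIn_or_exists_isCherry (h : TwoColorBound p S a b) (hb : 0 < b)
    (hcov : multipartite p ≤ R ⊔ B) (hu : u ∈ S) (hv : v ∈ S) (huv : p u ≠ p v)
    (hR : R.Adj u v)
    (htight : ∀ r, IsTight p S a b r → IsTight p S a b (p u) ∧ (r = p u ∨ r = p v)) :
    HasMatchingIn R S a ∨
      ∃ D ⊆ S, IsCherry R B D ∧ ∀ r, IsTight p S a b r → r ∈ D.image p := by
  rcases exists_isCherry_or_forall_adj hcov hu hv huv hR with ⟨D, hDS, hD, hDu, hDv⟩ | hpart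
  · exact .inr ⟨D, hDS, hD, fun r hr => by rcases (htight r hr).2 with rfl | rfl <;> assumption⟩
  have hout : ∀ r, a ≤ #{x ∈ S | p x ≠ r} := fun r => by
    have := h.add_le_outside r
    omega
  by_cases hPu : IsTight p S a b (p u)
  · have hM : HasMatchingIn R ({x ∈ S | p x = p u} ∪ {x ∈ S | p x ≠ p u}) a :=
      hasMatchingIn_of_biclique (fun x hx y hy => hpart x (mem_filter.1 hx).1 (mem_filter.1 hx).2
        y (mem_filter.1 hy).1 (mem_filter.1 hy).2) (h.le_card_part hPu) (hout _)
    rw [filter_union_filter_not_eq] at hM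
    exact .inl hM
  by_cases hred : ∀ x ∈ S, ∀ y ∈ S, p x ≠ p y → R.Adj x y
  · exact .inl (hasMatchingIn_of_multipartite hred (by have := h.two_mul_add_le; omega) hout)
  push Not at hred
  obtain ⟨x, hx, y, hy, hxy, hxyR⟩ := hred
  have hxu : p x ≠ p u := fun hxu => hxyR (hpart x hx hxu y hy (hxu ▸ hxy.symm))
  have hyu : p y ≠ p u := fun hyu => hxyR (hpart y hy hyu x hx (hyu ▸ hxy)).symm
  have hcherry : IsCherry R B {x, u, y} :=
    ⟨x, u, y, (hpart u hu rfl x hx hxu).symm, (adj_or_adj_of_ne hcov hxy).resolve_left hxyR,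
      fun h => hyu (h ▸ rfl), rfl⟩
  exact .inr ⟨_, by simp [insert_subset_iff, *], hcherry, fun r hr => absurd (htight r hr).1 hPu⟩

end Cherry

theorem TwoColorBound.hasMatchingIn (h : TwoColorBound p S a b)
    (hcov : multipartite p ≤ R ⊔ B) : HasMatchingIn R S a ∨ HasMatchingIn B S b := by
  classical
  induction a generalizing b S with
  | zero => exact .inl (hasMatchingIn_zero R S)
  | succ a ih =>
    obtain _ | b := b
    · exact .inr (hasMatchingIn_zero B S)
    have hstep : (∃ D ⊆ S, IsCherry R B D ∧
        ∀ r, IsTight p S (a + 1) (b + 1) r → r ∈ D.image p) →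
        HasMatchingIn R S (a + 1) ∨ HasMatchingIn B S (b + 1) := fun ⟨D, hDS, hD, hDt⟩ =>
      hD.hasMatchingIn hDS (ih (h.sdiff hDS hD.card_eq_three hDt))
    obtain ⟨u, hu, v, hv, huv, htight⟩ := h.exists_pair_forall_isTight a.succ_pos b.succ_pos
    rcases adj_or_adj_of_ne hcov huv with hR | hB
    · rcases h.hasMatchingIn_or_exists_isCherry b.succ_pos hcov hu hv huv hR htight with hM | hD
      · exact .inl hM
      · exact hstep hD
    · rcases h.symm.hasMatchingIn_or_exists_isCherry a.succ_pos (hcov.trans_eq (sup_comm R B))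
        hu hv huv hB fun r hr => (htight r hr.symm).imp_left IsTight.symm with
        hM | ⟨D, hDS, hD, hDt⟩
      · exact .inr hM
      · exact hstep ⟨D, hDS, hD.symm, fun r hr => hDt r hr.symm⟩

end TwoColoring

section Exchange

open Finset

variable {ι : Type*} {R B : SimpleGraph V} {p : V → ι} {C D : B.ConnectedComponent}
  {M : Finset (V × V)} {e : V × V} {u v x y : V}

/-- The complete multipartite graph without the `B`-edges inside the component `C` of `B`. -/
def multipartiteOff (p : V → ι) (C : B.ConnectedComponent) : SimpleGraph V :=
  multipartite p \ C.toSimpleGraph.spanningCoe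

lemma multipartiteOff_adj :
    (multipartiteOff p C).Adj x y ↔ p x ≠ p y ∧ ¬ (x ∈ C.supp ∧ B.Adj x y) := by
  rw [multipartiteOff, sdiff_adj, ConnectedComponent.adj_spanningCoe_toSimpleGraph, comap_adj,
    top_adj]

lemma adj_and_multipartiteOff_adj (hcov : multipartite p ≤ R ⊔ B) (hx : x ∉ D.supp)
    (hy : y ∈ D.supp) (hxy : p x ≠ p y) : R.Adj x y ∧ (multipartiteOff p C).Adj x y := by
  have hB : ¬ B.Adj x y := fun h => hx ((D.mem_supp_congr_adj h).2 hy)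
  exact ⟨(adj_or_adj_of_ne hcov hxy).resolve_right hB, multipartiteOff_adj.2 ⟨hxy, fun h => hB h.2⟩⟩

lemma adj_or_exists_component_ne (hcov : multipartite p ≤ R ⊔ B)
    (h : (multipartiteOff p C).Adj x y) : R.Adj x y ∨ ∃ D ≠ C, x ∈ D.supp ∧ y ∈ D.supp := by
  obtain ⟨hxy, hC⟩ := multipartiteOff_adj.1 h
  refine (adj_or_adj_of_ne hcov hxy).imp_right fun hB =>
    ⟨B.connectedComponentMk x, fun hxC => hC ⟨hxC, hB⟩, rfl, ?_⟩
  exact ((B.connectedComponentMk x).mem_supp_congr_adj hB).1 rfl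

lemma IsMatchingSet.exists_card_succ_of_mem (hcov : multipartite p ≤ R ⊔ B)
    (hM : IsMatchingSet (multipartiteOff p C) M) (he : (x, y) ∈ M) (hx : x ∉ D.supp)
    (hy : y ∉ D.supp) (hu : u ∈ D.supp) (hv : v ∈ D.supp) (huM : ¬ Covers M u)
    (hvM : ¬ Covers M v) (huv : p u ≠ p v) :
    ∃ M', IsMatchingSet (multipartiteOff p C) M' ∧ #M' = #M + 1 ∧
      ∀ f ∈ M', R.Adj f.1 f.2 ∨ f ∈ M := by
  classical
  wlog hpart : p x ≠ p u ∧ p y ≠ p v generalizing u v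
  · have hxy := (multipartiteOff_adj.1 (hM.1 _ he)).1
    refine this hv hu hvM huM huv.symm ?_
    grind
  obtain ⟨hxuR, hxu⟩ := adj_and_multipartiteOff_adj (C := C) hcov hx hu hpart.1
  obtain ⟨hyvR, hyv⟩ := adj_and_multipartiteOff_adj (C := C) hcov hy hv hpart.2
  obtain ⟨M', hsub, hM', hcard⟩ :=
    hM.exists_augment he huM hvM (ne_of_apply_ne p huv) hxu.symm hyv.symm
  refine ⟨M', hM', hcard, fun f hf => ?_⟩
  rcases mem_insert.1 (hsub hf) with rfl | hf
  · exact .inl hxuR.symm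
  · exact (mem_insert.1 hf).imp_left (by rintro rfl; exact hyvR.symm)

lemma IsMatchingSet.exists_card_succ_of_not_covers (hcov : multipartite p ≤ R ⊔ B)
    (hM : IsMatchingSet (multipartiteOff p C) M) (hx : x ∉ D.supp) (hxM : ¬ Covers M x)
    (hu : u ∈ D.supp) (hv : v ∈ D.supp) (huM : ¬ Covers M u) (hvM : ¬ Covers M v)
    (huv : p u ≠ p v) :
    ∃ M', IsMatchingSet (multipartiteOff p C) M' ∧ #M' = #M + 1 ∧
      ∀ f ∈ M', R.Adj f.1 f.2 ∨ f ∈ M := by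
  classical
  wlog hpart : p x ≠ p u generalizing u v
  · exact this hv hu hvM huM huv.symm (not_not.1 hpart ▸ huv)
  obtain ⟨hxuR, hxu⟩ := adj_and_multipartiteOff_adj (C := C) hcov hx hu hpart
  exact ⟨_, hM.insert_pair hxu hxM huM, card_insert_of_not_covers hxM,
    fun f hf => (mem_insert.1 hf).imp_left (by rintro rfl; exact hxuR)⟩

lemma IsMatchingSet.exists_exchange [Finite V] (hcov : multipartite p ≤ R ⊔ B)
    (hC : ∀ D : B.ConnectedComponent, D.supp.ncard ≤ C.supp.ncard)
    (hM : IsMatchingSet (multipartiteOff p C) M) (he : e ∈ M) (heR : ¬ R.Adj e.1 e.2) :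
    ∃ M', IsMatchingSet (multipartiteOff p C) M' ∧ #M' = #M ∧
      ∀ f ∈ M', R.Adj f.1 f.2 ∨ f ∈ M ∧ f ≠ e := by
  classical
  obtain ⟨D, hDC, hu, hv⟩ := (adj_or_exists_component_ne hcov (hM.1 e he)).resolve_left heR
  have huv := (multipartiteOff_adj.1 (hM.1 e he)).1
  have hM₀ := hM.subset (erase_subset e M)
  obtain ⟨huM, hvM⟩ := hM.not_covers_erase he
  suffices ∃ M', IsMatchingSet (multipartiteOff p C) M' ∧ #M' = #(M.erase e) + 1 ∧
      ∀ f ∈ M', R.Adj f.1 f.2 ∨ f ∈ M.erase e by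
    simpa only [card_erase_add_one he, mem_erase, and_comm] using this
  by_cases hfar : ∃ f ∈ M.erase e, f.1 ∉ D.supp ∧ f.2 ∉ D.supp
  · obtain ⟨f, hf, hf₁, hf₂⟩ := hfar
    exact hM₀.exists_card_succ_of_mem hcov hf hf₁ hf₂ hu hv huM hvM huv
  have hmeet : ∀ f ∈ M, f.1 ∈ D.supp ∨ f.2 ∈ D.supp := by
    intro f hf
    by_contra! hfD
    exact hfar ⟨f, mem_erase.2 ⟨ne_of_apply_ne Prod.fst fun h => hfD.1 (h ▸ hu), hf⟩, hfD⟩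
  have hdisj := pairwise_disjoint_supp_connectedComponent B hDC.symm
  cases nonempty_fintype V
  have hcard := hC D
  rw [Set.ncard_eq_toFinset_card', Set.ncard_eq_toFinset_card'] at hcard
  obtain ⟨w, hwC, hwM⟩ := hM.exists_mem_not_covers (Set.disjoint_toFinset.2 hdisj) hcard
    (by simpa only [Set.mem_toFinset] using hmeet) he (Set.mem_toFinset.2 hu)
    (Set.mem_toFinset.2 hv)
  exact hM₀.exists_card_succ_of_not_covers hcov (Set.disjoint_left.1 hdisj (Set.mem_toFinset.1 hwC))
    (fun h => hwM (h.mono (erase_subset e M))) hu hv huM hvM huv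

lemma IsMatchingSet.exists_of_multipartiteOff [Finite V] (hcov : multipartite p ≤ R ⊔ B)
    (hC : ∀ D : B.ConnectedComponent, D.supp.ncard ≤ C.supp.ncard)
    (hM : IsMatchingSet (multipartiteOff p C) M) : ∃ M', IsMatchingSet R M' ∧ #M' = #M := by
  classical
  induction hn : #{f ∈ M | ¬ R.Adj f.1 f.2} using Nat.strong_induction_on generalizing M with
  | _ n ih
  subst hn
  by_cases hR : ∀ e ∈ M, R.Adj e.1 e.2
  · exact ⟨M, hM.of_forall_adj hR, rfl⟩
  push Not at hR
  obtain ⟨e, he, heR⟩ := hR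
  obtain ⟨M', hM', hcard, hsub⟩ := hM.exists_exchange hcov hC he heR
  have hlt : #{f ∈ M' | ¬ R.Adj f.1 f.2} < #{f ∈ M | ¬ R.Adj f.1 f.2} := by
    refine card_lt_card ((ssubset_iff_of_subset fun f hf => ?_).2
      ⟨e, mem_filter.2 ⟨he, heR⟩, fun h => ?_⟩)
    · obtain ⟨hf, hfR⟩ := mem_filter.1 hf
      exact mem_filter.2 ⟨((hsub f hf).resolve_left hfR).1, hfR⟩
    · obtain ⟨h, -⟩ := mem_filter.1 h
      exact ((hsub e h).resolve_left heR).2 rfl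
  obtain ⟨M'', hM'', hcard'⟩ := ih _ hlt hM' rfl
  exact ⟨M'', hM'', hcard'.trans hcard⟩

theorem exists_connMatching_of_edges_reachable [Fintype V] [DecidableEq ι] {a b : ℕ}
    (hcov : multipartite p ≤ R ⊔ B)
    (hR : ∀ ⦃u v x y⦄, R.Adj u v → R.Adj x y → R.Reachable u x)
    (h : TwoColorBound p univ a b) :
    (∃ M, ConnMatching R M ∧ #M = a) ∨ ∃ M, ConnMatching B M ∧ #M = b := by
  cases isEmpty_or_nonempty V
  · have ha : 2 * a + b ≤ 1 := by simpa using h.two_mul_add_le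
    exact .inl ⟨∅, .empty R, by rw [card_empty]; omega⟩
  obtain ⟨C, hC⟩ := Finite.exists_max fun D : B.ConnectedComponent => D.supp.ncard
  rcases h.hasMatchingIn (R := multipartiteOff p C) (B := C.toSimpleGraph.spanningCoe)
    le_sdiff_sup with ⟨M, -, hM, rfl⟩ | ⟨M, -, hM, rfl⟩
  · obtain ⟨M', hM', hcard⟩ := hM.exists_of_multipartiteOff hcov hC
    exact .inl ⟨M', ⟨hM', fun e he f hf => hR (hM'.1 e he) (hM'.1 f hf)⟩, hcard⟩
  · have hMC := fun e he => C.adj_spanningCoe_toSimpleGraph.1 (hM.1 e he)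
    exact .inr ⟨M, ⟨hM.of_forall_adj fun e he => (hMC e he).2, fun e he f hf =>
      C.reachable_of_mem_supp (hMC e he).1 (hMC f hf).1⟩, rfl⟩

end Exchange

section Disconnected

open Finset

variable {ι : Type*} {G R B : SimpleGraph V} {p : V → ι} {X W : Set V} {a b : ℕ} {r s : ι}
  {u v w x y u' v' w' : V}

/-- `X` is a union of connected components of `G`. -/
def IsComponentUnion (G : SimpleGraph V) (X : Set V) : Prop :=
  ∀ ⦃x y⦄, G.Adj x y → (x ∈ X ↔ y ∈ X)

lemma IsComponentUnion.compl (hX : IsComponentUnion G X) : IsComponentUnion G Xᶜ :=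
  fun _ _ h => not_congr (hX h)

lemma IsComponentUnion.not_adj (hX : IsComponentUnion G X) (hx : x ∈ X) (hy : y ∉ X) :
    ¬ G.Adj x y :=
  fun h => hy ((hX h).1 hx)

lemma isComponentUnion_setOf_reachable (G : SimpleGraph V) (u : V) :
    IsComponentUnion G {x | G.Reachable u x} :=
  fun _ _ h => ⟨fun hx => hx.trans h.reachable, fun hy => hy.trans h.symm.reachable⟩

lemma part_eq_of_opposite (hcov : multipartite p ≤ R ⊔ B) (hX : IsComponentUnion R X)
    (hW : IsComponentUnion B W) (hx : x ∈ X ∩ W) (hy : y ∈ Xᶜ ∩ Wᶜ) : p x = p y := by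
  by_contra hxy
  exact (adj_or_adj_of_ne hcov hxy).elim (hX.not_adj hx.1 hy.1) (hW.not_adj hx.2 hy.2)

lemma inter_nonempty_of_part_ne (hcov : multipartite p ≤ R ⊔ B) (hX : IsComponentUnion R X)
    (hW : IsComponentUnion B W) (hu : u ∈ X) (hv : v ∈ X) (huv : p u ≠ p v) (hw : w ∈ W) :
    (X ∩ W).Nonempty := by
  by_contra hempty
  have hXW : ∀ x ∈ X, x ∈ X ∩ Wᶜ := fun x hx => ⟨hx, fun hxW => hempty ⟨x, hx, hxW⟩⟩
  have hw' : w ∈ Xᶜ ∩ Wᶜᶜ := ⟨fun hwX => hempty ⟨w, hwX, hw⟩, not_not.2 hw⟩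
  have heq : ∀ x ∈ X, p x = p w := fun x hx => part_eq_of_opposite hcov hX hW.compl (hXW x hx) hw'
  exact huv ((heq u hu).trans (heq v hv).symm)

lemma part_eq_of_mem_iff_mem (hcov : multipartite p ≤ R ⊔ B) (hX : IsComponentUnion R X)
    (hW : IsComponentUnion B W) (hu : u ∈ X ∩ W) (hv : v ∈ Xᶜ ∩ Wᶜ) (hx : x ∈ X ↔ x ∈ W) :
    p x = p u := by
  by_cases hxX : x ∈ X
  · exact (part_eq_of_opposite hcov hX hW ⟨hxX, hx.1 hxX⟩ hv).trans
      (part_eq_of_opposite hcov hX hW hu hv).symm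
  · exact (part_eq_of_opposite hcov hX hW hu ⟨hxX, mt hx.2 hxX⟩).symm

lemma exists_grid_parts (hcov : multipartite p ≤ R ⊔ B) (hX : IsComponentUnion R X)
    (hW : IsComponentUnion B W) (hu : u ∈ X) (hv : v ∈ X) (huv : p u ≠ p v) (hu' : u' ∉ X)
    (hv' : v' ∉ X) (huv' : p u' ≠ p v') (hw : w ∈ W) (hw' : w' ∉ W) :
    ∃ r s, r ≠ s ∧ (∀ x, (x ∈ X ↔ x ∈ W) → p x = r) ∧ ∀ x, (x ∈ X ↔ x ∉ W) → p x = s := by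
  obtain ⟨x₁, h₁⟩ := inter_nonempty_of_part_ne hcov hX hW hu hv huv hw
  obtain ⟨x₂, h₂⟩ := inter_nonempty_of_part_ne hcov hX hW.compl hu hv huv hw'
  obtain ⟨x₃, h₃⟩ := inter_nonempty_of_part_ne hcov hX.compl hW hu' hv' huv' hw
  obtain ⟨x₄, h₄⟩ := inter_nonempty_of_part_ne hcov hX.compl hW.compl hu' hv' huv' hw'
  have hdiag : ∀ x, (x ∈ X ↔ x ∈ W) → p x = p x₁ := fun x =>
    part_eq_of_mem_iff_mem hcov hX hW h₁ h₄
  have hanti : ∀ x, (x ∈ X ↔ x ∉ W) → p x = p x₂ := fun x =>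
    part_eq_of_mem_iff_mem hcov hX hW.compl h₂ ⟨h₃.1, not_not.2 h₃.2⟩
  refine ⟨p x₁, p x₂, fun heq => ?_, hdiag, hanti⟩
  have hconst : ∀ x ∈ X, p x = p x₁ := fun x hx => by
    by_cases hxW : x ∈ W
    · exact hdiag x (iff_of_true hx hxW)
    · exact (hanti x (iff_of_true hx hxW)).trans heq.symm
  exact huv ((hconst u hu).trans (hconst v hv).symm)

lemma exists_connMatching_of_part_eq {S T : Finset V} (hcov : multipartite p ≤ R ⊔ B)
    (hW : IsComponentUnion B W) (hrs : r ≠ s) (hS : ∀ x ∈ S, x ∈ W ∧ p x = r)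
    (hT : ∀ x ∈ T, x ∉ W ∧ p x = s) (haS : a ≤ #S) (haT : a ≤ #T) :
    ∃ M, ConnMatching R M ∧ #M = a := by
  refine exists_connMatching_of_biclique (fun x hx y hy => ?_) haS haT
  obtain ⟨hxW, rfl⟩ := hS x hx
  obtain ⟨hyW, rfl⟩ := hT y hy
  exact (adj_or_adj_of_ne hcov hrs).resolve_right (hW.not_adj hxW hyW)

variable [Fintype V] [DecidableEq ι]

lemma exists_connMatching_of_grid (hcov : multipartite p ≤ R ⊔ B) (hX : IsComponentUnion R X)
    (hW : IsComponentUnion B W) (hrs : r ≠ s) (hdiag : ∀ x, (x ∈ X ↔ x ∈ W) → p x = r)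
    (hanti : ∀ x, (x ∈ X ↔ x ∉ W) → p x = s) (h : TwoColorBound p univ a b) :
    (∃ M, ConnMatching R M ∧ #M = a) ∨ ∃ M, ConnMatching B M ∧ #M = b := by
  classical
  let S₁₁ : Finset V := {x | x ∈ X ∧ x ∈ W}
  let S₁₀ : Finset V := {x | x ∈ X ∧ x ∉ W}
  let S₀₁ : Finset V := {x | x ∉ X ∧ x ∈ W}
  let S₀₀ : Finset V := {x | x ∉ X ∧ x ∉ W}
  have hS₁₁ : ∀ x ∈ S₁₁, x ∈ X ∧ x ∈ W ∧ p x = r := by grind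
  have hS₁₀ : ∀ x ∈ S₁₀, x ∈ X ∧ x ∉ W ∧ p x = s := by grind
  have hS₀₁ : ∀ x ∈ S₀₁, x ∉ X ∧ x ∈ W ∧ p x = s := by grind
  have hS₀₀ : ∀ x ∈ S₀₀, x ∉ X ∧ x ∉ W ∧ p x = r := by grind
  have hr : a + b ≤ #S₁₀ + #S₀₁ + 1 := (h.add_le_outside r).trans <| by
    grw [← card_union_le]
    gcongr
    grind
  have hs : a + b ≤ #S₁₁ + #S₀₀ + 1 := (h.add_le_outside s).trans <| by
    grw [← card_union_le]
    gcongr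
    grind
  have hcov' : multipartite p ≤ B ⊔ R := hcov.trans_eq (sup_comm R B)
  by_contra hno
  have hrow₁ : ¬ (a ≤ #S₁₁ ∧ a ≤ #S₁₀) := fun ⟨h₁, h₂⟩ => hno <| .inl <|
    exists_connMatching_of_part_eq hcov hW hrs (by grind) (by grind) h₁ h₂
  have hrow₀ : ¬ (a ≤ #S₀₁ ∧ a ≤ #S₀₀) := fun ⟨h₁, h₂⟩ => hno <| .inl <|
    exists_connMatching_of_part_eq hcov hW hrs.symm (by grind) (by grind) h₁ h₂
  have hcol₁ : ¬ (b ≤ #S₁₁ ∧ b ≤ #S₀₁) := fun ⟨h₁, h₂⟩ => hno <| .inr <|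
    exists_connMatching_of_part_eq hcov' hX hrs (by grind) (by grind) h₁ h₂
  have hcol₀ : ¬ (b ≤ #S₁₀ ∧ b ≤ #S₀₀) := fun ⟨h₁, h₂⟩ => hno <| .inr <|
    exists_connMatching_of_part_eq hcov' hX hrs.symm (by grind) (by grind) h₁ h₂
  omega

lemma exists_connMatching_of_not_reachable (hcov : multipartite p ≤ R ⊔ B)
    (hR : R ≤ multipartite p) (huv : R.Adj u v) (huv' : R.Adj u' v') (hu : ¬ R.Reachable u u')
    (hw : ¬ B.Reachable w w') (h : TwoColorBound p univ a b) :
    (∃ M, ConnMatching R M ∧ #M = a) ∨ ∃ M, ConnMatching B M ∧ #M = b := by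
  have hX := isComponentUnion_setOf_reachable R u
  have hW := isComponentUnion_setOf_reachable B w
  obtain ⟨r, s, hrs, hdiag, hanti⟩ := exists_grid_parts hcov hX hW .rfl huv.reachable
    (hR huv) hu (fun hv' => hu (hv'.trans huv'.symm.reachable)) (hR huv') .rfl hw
  exact exists_connMatching_of_grid hcov hX hW hrs hdiag hanti h

theorem exists_connMatching_of_two_coloring (hcov : multipartite p ≤ R ⊔ B)
    (h : TwoColorBound p univ a b) :
    (∃ M, ConnMatching R M ∧ #M = a) ∨ ∃ M, ConnMatching B M ∧ #M = b := by
  wlog hRp : R ≤ multipartite p generalizing R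
  · have hcov' : multipartite p ≤ R ⊓ multipartite p ⊔ B := fun x y hxy =>
      (hcov hxy).imp_left fun hR => ⟨hR, hxy⟩
    exact (this hcov' inf_le_right).imp_left fun ⟨M, hM, hcard⟩ => ⟨M, hM.mono inf_le_left, hcard⟩
  by_cases hB : ∀ w w', B.Reachable w w'
  · exact (exists_connMatching_of_edges_reachable (hcov.trans_eq (sup_comm R B))
      (fun _ _ _ _ _ _ => hB _ _) h.symm).symm
  by_cases hR : ∀ ⦃u v x y⦄, R.Adj u v → R.Adj x y → R.Reachable u x
  · exact exists_connMatching_of_edges_reachable hcov hR h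
  push Not at hB hR
  obtain ⟨w, w', hw⟩ := hB
  obtain ⟨u, v, u', v', huv, huv', hu⟩ := hR
  exact exists_connMatching_of_not_reachable hcov hRp huv huv' hu hw h

end Disconnected

section ThreeColoring

open Finset

lemma colorSub_adj {G : SimpleGraph V} {k : ℕ} (c : Sym2 V → Fin k) {u v : V} (h : G.Adj u v) :
    (colorSub G c (c s(u, v))).Adj u v :=
  ⟨h.ne, .inl ⟨h, rfl⟩⟩

variable [Fintype V]

theorem exists_connMatching_of_small_components {H R B : SimpleGraph V} {a b : ℕ}
    (hcov : ⊤ ≤ H ⊔ R ⊔ B) (ha : 2 * a + b ≤ Fintype.card V + 1)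
    (hb : a + 2 * b ≤ Fintype.card V + 1)
    (hsmall : ∀ v, Nat.card {u | H.Reachable v u} + (a + b) ≤ Fintype.card V + 1) :
    (∃ M, ConnMatching R M ∧ #M = a) ∨ ∃ M, ConnMatching B M ∧ #M = b := by
  classical
  refine exists_connMatching_of_two_coloring (p := H.connectedComponentMk) ?_ ⟨ha, hb, ?_⟩
  · intro x y hxy
    rcases hcov (ne_of_apply_ne _ hxy) with (hH | hR) | hB
    exacts [absurd (ConnectedComponent.sound hH.reachable) hxy, .inl hR, .inr hB]
  · intro C
    induction C using ConnectedComponent.ind with | h v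
    have hpart : #{x | H.connectedComponentMk x = H.connectedComponentMk v} +
        #{x | H.connectedComponentMk x ≠ H.connectedComponentMk v} = Fintype.card V :=
      card_filter_add_card_filter_not _
    have hcard : Nat.card {u | H.Reachable v u} =
        #{x | H.connectedComponentMk x = H.connectedComponentMk v} := by
      rw [Nat.card_eq_fintype_card, Fintype.card_subtype]
      simp only [Set.mem_ofPred_eq, ConnectedComponent.eq, reachable_comm]
    have := hsmall v
    omega

theorem stmt13_general (x : Fin 3 → ℕ) (c : Sym2 V → Fin 3) (i : Fin 3)
    (hcard : ∀ j ≠ i, x j + ∑ k, x k ≤ Fintype.card V + 1 + x i)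
    (hsmall : ∀ v, Nat.card {u | (colorSub (⊤ : SimpleGraph V) c i).Reachable v u} + ∑ k, x k ≤
      Fintype.card V + 1 + x i) :
    ∃ j ≠ i, ∃ M, ConnMatching (colorSub (⊤ : SimpleGraph V) c j) M ∧ x j ≤ #M := by
  have hcolor : ∀ k, k = i ∨ k = i + 1 ∨ k = i + 2 := by omega
  have hsum : ∑ k, x k = x i + x (i + 1) + x (i + 2) := by
    simpa [Fin.sum_univ_three] using (Equiv.sum_comp (Equiv.addLeft i) x).symm
  have hcov : ⊤ ≤ colorSub ⊤ c i ⊔ colorSub ⊤ c (i + 1) ⊔ colorSub ⊤ c (i + 2) := fun u v huv => by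
    have huvc := colorSub_adj c huv
    rcases hcolor (c s(u, v)) with h | h | h <;> rw [h] at huvc
    exacts [.inl (.inl huvc), .inl (.inr huvc), .inr huvc]
  have h₁ := hcard (i + 1) (by simp)
  have h₂ := hcard (i + 2) (by simp)
  rcases exists_connMatching_of_small_components (a := x (i + 1)) (b := x (i + 2)) hcov (by omega)
    (by omega) (fun v => by have := hsmall v; omega) with ⟨M, hM, hxM⟩ | ⟨M, hM, hxM⟩
  · exact ⟨i + 1, by simp, M, hM, hxM.ge⟩
  · exact ⟨i + 2, by simp, M, hM, hxM.ge⟩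

end ThreeColoring

/-- Claim "no-large": in a 3-edge-colored `K_N`, `N = 2x₁ + x₂ + x₃ - 2`, if
for some color `i ∈ {2,3}` every component of `Gᵢ` has at most
`x₁ + xᵢ - 1` vertices, then some color `j` has a connected matching of size
at least `xⱼ`. -/
theorem stmt13 (x : Fin 3 → ℕ) (h1 : 1 ≤ x 1) (h2 : 1 ≤ x 2)
    (h12 : x 1 ≤ x 0) (h13 : x 2 ≤ x 0)
    (N : ℕ) (hN : N = 2 * x 0 + x 1 + x 2 - 2)
    (c : Sym2 (Fin N) → Fin 3)
    (i : Fin 3) (hi : i ≠ 0)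
    (hsmall : ∀ v : Fin N,
      Nat.card {u : Fin N |
        (colorSub (⊤ : SimpleGraph (Fin N)) c i).Reachable v u} ≤
      x 0 + x i - 1) :
    ∃ j : Fin 3, ∃ M,
      ConnMatching (colorSub (⊤ : SimpleGraph (Fin N)) c j) M ∧ x j ≤ M.card := by
  have hsum := Fin.sum_univ_three x
  have hcard := Fintype.card_fin N
  have hi' : i = 1 ∨ i = 2 := by omega
  obtain ⟨j, -, hj⟩ := stmt13_general x c i (by grind) (by grind)
  exact ⟨j, hj⟩
end
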